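/- arXiv:1807.06791 — 4 statements merged into one kernel-verified Lean document; each statement's English description precedes it below -/
import Mathlib

section
/- Let k ≥ 1 be an integer. Let a be a normalized Hecke eigensystem of weight 2k and let b be a normalized Hecke eigensystem of weight 2k+8. Then Σ_{n=1}^∞ a(n)·conj(b(n))·n^{−(2k+7)} ≠ 0. -/
open Complex Real
open scoped ComplexConjugate

noncomputable section

/-- `a : ℕ → ℂ` (with `a n` the `n`-th coefficient, `n ≥ 1`) is a normalized Hecke
eigensystem of weight `w`: `a 1 = 1`, the Hecke multiplicativity relations
`a m * a n = ∑_{d ∣ gcd(m,n)} d^{w-1} a(mn/d²)` hold, and Deligne's bound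
`|a p| ≤ 2 p^{(w-1)/2}` holds at every prime `p`. -/
def IsNormalizedHeckeEigensystem (w : ℕ) (a : ℕ → ℂ) : Prop :=
  a 1 = 1 ∧
  (∀ m n : ℕ, 1 ≤ m → 1 ≤ n →
      a m * a n = ∑ d ∈ (Nat.gcd m n).divisors, (d : ℂ) ^ (w - 1) * a (m * n / d ^ 2)) ∧
  (∀ p : ℕ, p.Prime → ‖a p‖ ≤ 2 * (p : ℝ) ^ (((w : ℝ) - 1) / 2))

namespace IsNormalizedHeckeEigensystem

variable {w : ℕ} {a : ℕ → ℂ}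

theorem map_mul_of_coprime (ha : IsNormalizedHeckeEigensystem w a) {m n : ℕ}
    (hm : 1 ≤ m) (hn : 1 ≤ n) (h : m.Coprime n) : a (m * n) = a m * a n := by
  rw [ha.2.1 m n hm hn, Nat.Coprime.gcd_eq_one h]
  simp

theorem map_prime_pow_add_two (ha : IsNormalizedHeckeEigensystem w a) {p : ℕ} (hp : p.Prime)
    (r : ℕ) : a (p ^ (r + 2)) = a p * a (p ^ (r + 1)) - (p : ℂ) ^ (w - 1) * a (p ^ r) := by
  have hpos : 0 < p ^ 2 := pow_pos hp.pos 2
  have hgcd : Nat.gcd p (p ^ (r + 1)) = p := Nat.gcd_eq_left (dvd_pow_self p (by omega))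
  have hdiv : p * p ^ (r + 1) / p ^ 2 = p ^ r :=
    Nat.div_eq_of_eq_mul_left hpos (by ring)
  rw [ha.2.1 p (p ^ (r + 1)) hp.one_le (Nat.one_le_pow _ _ hp.pos), hgcd,
    Nat.Prime.sum_divisors hp, hdiv]
  simp only [one_pow, Nat.cast_one, one_mul, Nat.div_one]
  rw [show p * p ^ (r + 1) = p ^ (r + 2) by ring]
  ring

/-- The Hecke recursion amplifies the bound at `p` at most like the Pell numbers, whose
consecutive ratios are at most `5 / 2`. -/
theorem norm_map_prime_pow_succ_le (ha : IsNormalizedHeckeEigensystem w a) (hw : 1 ≤ w) {p : ℕ}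
    (hp : p.Prime) (r : ℕ) :
    ‖a (p ^ (r + 1))‖ ≤ 2 * (5 / 2) ^ r * ((p : ℝ) ^ (((w : ℝ) - 1) / 2)) ^ (r + 1) := by
  have hs : 0 ≤ (p : ℝ) ^ (((w : ℝ) - 1) / 2) := by positivity
  have hs2 : ((p : ℝ) ^ (((w : ℝ) - 1) / 2)) ^ 2 = (p : ℝ) ^ (w - 1) := by
    rw [← Real.rpow_natCast, ← Real.rpow_mul (by positivity), ← Real.rpow_natCast,
      Nat.cast_sub hw]
    congr 1
    push_cast
    ring
  have hap := ha.2.2 p hp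
  have step (r : ℕ) : ‖a (p ^ (r + 2))‖ ≤
      2 * (p : ℝ) ^ (((w : ℝ) - 1) / 2) * ‖a (p ^ (r + 1))‖ +
        ((p : ℝ) ^ (((w : ℝ) - 1) / 2)) ^ 2 * ‖a (p ^ r)‖ := by
    rw [ha.map_prime_pow_add_two hp, hs2]
    refine (norm_sub_le _ _).trans ?_
    rw [norm_mul, norm_mul, norm_pow, Complex.norm_natCast]
    gcongr
  generalize (p : ℝ) ^ (((w : ℝ) - 1) / 2) = s at *
  induction r using Nat.twoStepInduction with
  | zero => simpa using hap
  | one =>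
    have h := step 0
    simp only [zero_add, pow_one, pow_zero, ha.1, norm_one] at h ⊢
    nlinarith [mul_le_mul_of_nonneg_left hap hs]
  | more r ih ih' =>
    calc ‖a (p ^ (r + 2 + 1))‖
        ≤ 2 * s * ‖a (p ^ (r + 1 + 1))‖ + s ^ 2 * ‖a (p ^ (r + 1))‖ := step (r + 1)
      _ ≤ 2 * s * (2 * (5 / 2) ^ (r + 1) * s ^ (r + 1 + 1)) +
            s ^ 2 * (2 * (5 / 2) ^ r * s ^ (r + 1)) := by gcongr
      _ = 12 * ((5 / 2) ^ r * s ^ (r + 3)) := by ring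
      _ ≤ 25 / 2 * ((5 / 2) ^ r * s ^ (r + 3)) := by gcongr; norm_num
      _ = 2 * (5 / 2) ^ (r + 2) * s ^ (r + 2 + 1) := by ring

theorem norm_map_le_of_odd (ha : IsNormalizedHeckeEigensystem w a) (hw : 1 ≤ w) {n : ℕ}
    (hn : Odd n) : ‖a n‖ ≤ n * (n : ℝ) ^ (((w : ℝ) - 1) / 2) := by
  induction n using Nat.recOnPosPrimePosCoprime with
  | zero => simp at hn
  | one => simp [ha.1]
  | prime_pow p r hp hr =>
    obtain ⟨r, rfl⟩ := Nat.exists_eq_succ_of_ne_zero hr.ne'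
    have hp3 : 3 ≤ p := by
      have h2 : p ≠ 2 := by
        rintro rfl
        exact (Nat.not_odd_iff_even.2 (even_two.pow_of_ne_zero (by omega))) hn
      have := hp.two_le
      omega
    refine (ha.norm_map_prime_pow_succ_le hw hp r).trans ?_
    have hcomm : ((p ^ (r + 1) : ℕ) : ℝ) ^ (((w : ℝ) - 1) / 2) =
        ((p : ℝ) ^ (((w : ℝ) - 1) / 2)) ^ (r + 1) := by
      rw [Nat.cast_pow, Real.rpow_pow_comm (by positivity)]
    rw [Nat.succ_eq_add_one, hcomm]
    gcongr
    have hp3' : (3 : ℝ) ≤ p := by exact_mod_cast hp3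
    calc (2 : ℝ) * (5 / 2) ^ r ≤ 3 * 3 ^ r := by gcongr <;> norm_num
      _ = 3 ^ (r + 1) := by ring
      _ ≤ (p : ℝ) ^ (r + 1) := by gcongr
      _ = ((p ^ (r + 1) : ℕ) : ℝ) := by push_cast; rfl
  | coprime m n hm hn' hmn ihm ihn =>
    obtain ⟨hmo, hno⟩ := Nat.odd_mul.1 hn
    rw [ha.map_mul_of_coprime (by omega) (by omega) hmn, norm_mul, Nat.cast_mul,
      Real.mul_rpow (by positivity) (by positivity)]
    calc ‖a m‖ * ‖a n‖ ≤ (m * (m : ℝ) ^ (((w : ℝ) - 1) / 2)) *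
          (n * (n : ℝ) ^ (((w : ℝ) - 1) / 2)) := by
            gcongr
            exacts [ihm hmo, ihn hno]
      _ = _ := by ring

end IsNormalizedHeckeEigensystem

/-- Bound for the normalized coefficient of a Hecke eigensystem at `2 ^ r`. -/
def twoPowBound : ℕ → ℝ
  | 0 => 1
  | r + 1 => 2 * (5 / 2) ^ r

theorem twoPowBound_nonneg (r : ℕ) : 0 ≤ twoPowBound r := by
  cases r <;> simp only [twoPowBound] <;> positivity

theorem IsNormalizedHeckeEigensystem.norm_map_two_pow_mul_le {w : ℕ} {a : ℕ → ℂ}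
    (ha : IsNormalizedHeckeEigensystem w a) (hw : 1 ≤ w) (r : ℕ) {m : ℕ} (hm : Odd m) :
    ‖a (2 ^ r * m)‖ ≤
      twoPowBound r * m * ((2 ^ r * m : ℕ) : ℝ) ^ (((w : ℝ) - 1) / 2) := by
  have h2 : ‖a (2 ^ r)‖ ≤ twoPowBound r * ((2 : ℝ) ^ (((w : ℝ) - 1) / 2)) ^ r := by
    cases r with
    | zero => simp [twoPowBound, ha.1]
    | succ r => exact_mod_cast ha.norm_map_prime_pow_succ_le hw Nat.prime_two r
  rw [ha.map_mul_of_coprime Nat.one_le_two_pow hm.pos (hm.coprime_two_left.pow_left r), norm_mul,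
    Nat.cast_mul, Real.mul_rpow (by positivity) (by positivity), Nat.cast_pow, Nat.cast_ofNat,
    ← Real.rpow_pow_comm (by positivity)]
  calc ‖a (2 ^ r)‖ * ‖a m‖ ≤ (twoPowBound r * ((2 : ℝ) ^ (((w : ℝ) - 1) / 2)) ^ r) *
        (m * (m : ℝ) ^ (((w : ℝ) - 1) / 2)) := by
          gcongr
          · exact mul_nonneg (twoPowBound_nonneg r) (by positivity)
          · exact ha.norm_map_le_of_odd hw hm
    _ = _ := by ring

theorem norm_rankin_selberg_term_le {k : ℕ} (hk : 1 ≤ k) {a b : ℕ → ℂ}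
    (ha : IsNormalizedHeckeEigensystem (2 * k) a)
    (hb : IsNormalizedHeckeEigensystem (2 * k + 8) b) (r : ℕ) {m : ℕ} (hm : Odd m) :
    ‖a (2 ^ r * m) * conj (b (2 ^ r * m)) / ((2 ^ r * m : ℕ) : ℂ) ^ (2 * k + 7)‖ ≤
      twoPowBound r ^ 2 / 16 ^ r * (1 / (m : ℝ) ^ 2) := by
  have hm0 : (0 : ℝ) < m := by exact_mod_cast hm.pos
  have hN : (0 : ℝ) < ((2 ^ r * m : ℕ) : ℝ) := by
    push_cast
    positivity
  have hA := ha.norm_map_two_pow_mul_le (by omega) r hm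
  have hB := hb.norm_map_two_pow_mul_le (by omega) r hm
  have hexp : ((2 ^ r * m : ℕ) : ℝ) ^ ((((2 * k : ℕ) : ℝ) - 1) / 2) *
      ((2 ^ r * m : ℕ) : ℝ) ^ ((((2 * k + 8 : ℕ) : ℝ) - 1) / 2) =
      ((2 ^ r * m : ℕ) : ℝ) ^ (2 * k + 3) := by
    rw [← Real.rpow_add hN, ← Real.rpow_natCast]
    congr 1
    push_cast
    ring
  rw [norm_div, norm_mul, RCLike.norm_conj, norm_pow, Complex.norm_natCast,
    div_le_iff₀ (by positivity)]
  have h0 := twoPowBound_nonneg r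
  refine (mul_le_mul hA hB (norm_nonneg _) (by positivity)).trans (le_of_eq ?_)
  calc _ = (twoPowBound r * m) ^ 2 * (((2 ^ r * m : ℕ) : ℝ) ^ ((((2 * k : ℕ) : ℝ) - 1) / 2) *
          ((2 ^ r * m : ℕ) : ℝ) ^ ((((2 * k + 8 : ℕ) : ℝ) - 1) / 2)) := by ring
    _ = (twoPowBound r * m) ^ 2 * ((2 ^ r * m : ℕ) : ℝ) ^ (2 * k + 3) := by rw [hexp]
    _ = _ := by
      rw [show 2 * k + 7 = 2 * k + 3 + 4 by ring, pow_add _ (2 * k + 3) 4]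
      have h16 : ((2 ^ r * m : ℕ) : ℝ) ^ 4 = 16 ^ r * (m : ℝ) ^ 4 := by
        push_cast
        rw [mul_pow, ← pow_mul, mul_comm r 4, pow_mul]
        norm_num
      rw [h16]
      field_simp

theorem hasSum_twoPowBound_sq_div :
    HasSum (fun r : ℕ => twoPowBound r ^ 2 / 16 ^ r) (55 / 39) := by
  have hterm (r : ℕ) :
      twoPowBound (r + 1) ^ 2 / 16 ^ (r + 1) = 1 / 4 * (25 / 64 : ℝ) ^ r := by
    simp only [twoPowBound]
    rw [show (25 / 64 : ℝ) = (5 / 2) ^ 2 / 16 by norm_num, div_pow _ (16 : ℝ), ← pow_mul,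
      pow_succ 16 r]
    field_simp
    ring
  have hvalue : (55 / 39 : ℝ) - ∑ r ∈ Finset.range 1, twoPowBound r ^ 2 / 16 ^ r =
      1 / 4 * (1 - 25 / 64)⁻¹ := by
    norm_num [twoPowBound]
  rw [← hasSum_nat_add_iff' 1, hvalue]
  simp only [hterm]
  exact (hasSum_geometric_of_lt_one (by norm_num) (by norm_num)).mul_left (1 / 4)

theorem sum_range_inv_odd_sq_le (n : ℕ) :
    ∑ j ∈ Finset.range (n + 1), (1 : ℝ) / ((2 * j + 1 : ℕ) : ℝ) ^ 2 ≤
      (5 / 4 : ℝ) - 1 / (4 * ((n : ℝ) + 1)) := by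
  induction n with
  | zero => norm_num
  | succ n ih =>
    rw [Finset.sum_range_succ]
    have h : 1 / ((2 * (n + 1) + 1 : ℕ) : ℝ) ^ 2 ≤
        1 / (4 * ((n : ℝ) + 1)) - 1 / (4 * ((n : ℝ) + 1 + 1)) := by
      rw [div_sub_div _ _ (by positivity) (by positivity),
        div_le_div_iff₀ (by positivity) (by positivity)]
      push_cast
      nlinarith
    push_cast at h ih ⊢
    linarith

theorem sum_range_inv_odd_sq_le_five_div_four (n : ℕ) :
    ∑ j ∈ Finset.range n, 1 / ((2 * j + 1 : ℕ) : ℝ) ^ 2 ≤ 5 / 4 := by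
  cases n with
  | zero => norm_num
  | succ n =>
    have h := sum_range_inv_odd_sq_le n
    have : (0 : ℝ) ≤ 1 / (4 * (n + 1)) := by positivity
    linarith

theorem summable_inv_odd_sq : Summable fun j : ℕ => 1 / ((2 * j + 1 : ℕ) : ℝ) ^ 2 :=
  summable_of_sum_range_le (fun _ => by positivity) sum_range_inv_odd_sq_le_five_div_four

/-- If `a` is a normalized Hecke eigensystem of weight `2k` and `b` one of weight `2k+8`,
then `∑_{n≥1} a(n) conj(b(n)) n^{-(2k+7)} ≠ 0`. -/
theorem rankin_selberg_value_ne_zero (k : ℕ) (hk : 1 ≤ k) (a b : ℕ → ℂ)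
    (ha : IsNormalizedHeckeEigensystem (2 * k) a)
    (hb : IsNormalizedHeckeEigensystem (2 * k + 8) b) :
    (∑' n : ℕ, a (n + 1) * conj (b (n + 1)) / ((n : ℂ) + 1) ^ (2 * k + 7)) ≠ 0 := by
  set f : ℕ → ℂ := fun n => a (n + 1) * conj (b (n + 1)) / ((n : ℂ) + 1) ^ (2 * k + 7)
  let F : ℕ × ℕ → ℝ := fun x =>
    twoPowBound x.1 ^ 2 / 16 ^ x.1 * (1 / ((2 * x.2 + 1 : ℕ) : ℝ) ^ 2)
  have hF0 : ∀ x, 0 ≤ F x := fun x => by positivity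
  have hF : Summable F := hasSum_twoPowBound_sq_div.summable.mul_of_nonneg summable_inv_odd_sq
    (fun _ => by positivity) (fun _ => by positivity)
  have hFle : ∑' x, F x ≤ 55 / 39 * (5 / 4) := by
    rw [hF.tsum_prod]
    simp only [F, tsum_mul_left, tsum_mul_right, hasSum_twoPowBound_sq_div.tsum_eq]
    gcongr
    exact Real.tsum_le_of_sum_range_le (fun _ => by positivity)
      sum_range_inv_odd_sq_le_five_div_four
  have hdecomp (n : ℕ) : ∃ x : ℕ × ℕ, n + 1 = 2 ^ x.1 * (2 * x.2 + 1) := by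
    obtain ⟨r, m, ⟨j, rfl⟩, h⟩ := Nat.exists_eq_two_pow_mul_odd (Nat.succ_ne_zero n)
    exact ⟨(r, j), h⟩
  choose φ hφ using hdecomp
  have hφinj : Function.Injective φ := fun m n h => by
    have hm := hφ m
    rw [h, ← hφ n] at hm
    omega
  have hφ0 : φ 0 = (0, 0) := by
    have h := hφ 0
    have h1 := Nat.eq_one_of_mul_eq_one_right h.symm
    have h2 := Nat.eq_one_of_mul_eq_one_left h.symm
    ext
    · simpa using h1
    · simpa using h2
  have hg : Summable (F ∘ φ) := hF.comp_injective hφinj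
  have hfg (n : ℕ) : ‖f n‖ ≤ (F ∘ φ) n := by
    have h := norm_rankin_selberg_term_le hk ha hb (φ n).1 (odd_two_mul_add_one (φ n).2)
    rw [← hφ n] at h
    simpa [f, F] using h
  have hf : Summable f := hg.of_norm_bounded hfg
  have hf0 : f 0 = 1 := by simp [f, ha.1, hb.1]
  have hg0 : (F ∘ φ) 0 = 1 := by simp [F, hφ0, twoPowBound]
  have htail : ‖∑' n, f (n + 1)‖ ≤ ∑' n, (F ∘ φ) (n + 1) :=
    tsum_of_norm_bounded ((summable_nat_add_iff 1).2 hg).hasSum fun n => hfg (n + 1)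
  have hgF : ∑' n, (F ∘ φ) n ≤ ∑' x, F x := tsum_comp_le_tsum_of_inj hF hF0 hφinj
  rw [hg.tsum_eq_zero_add, hg0] at hgF
  intro h
  rw [hf.tsum_eq_zero_add, hf0, add_comm] at h
  rw [eq_neg_of_add_eq_zero_left h, norm_neg, norm_one] at htail
  linarith

end
end

section
/- Let N ≥ 1 and k ≥ 1 be integers, let f be a cusp form of weight 2k for Γ₀(N) with Fourier coefficients a(n) and g a cusp form of weight 2k+8 for Γ₀(N) with Fourier coefficients b(n). Let E₈^{(N)}(τ) = Σ_{γ ∈ Γ∞\Γ₀(N)} j(γ,τ)^{−8}, and let F be a measurable fundamental domain for the action of Γ₀(N) on ℍ. Then ∫_F f(τ)·conj(g(τ))·E₈^{(N)}(τ)·(Im τ)^{2k+8} d*τ = (4π)^{−(2k+7)}·Γ(2k+7)·Σ_{n=1}^∞ a(n)·conj(b(n))·n^{−(2k+7)}. -/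
open Complex MeasureTheory Real Set Filter
open scoped ComplexConjugate MatrixGroups

noncomputable section

/-- The upper half-plane, as a subset of `ℂ`. -/
def UHP : Set ℂ := {τ | 0 < τ.im}

/-- The Möbius action `τ ↦ (aτ+b)/(cτ+d)` of `γ = (a b; c d) ∈ SL₂(ℤ)` on the
upper half-plane. -/
def moeb (γ : SL(2, ℤ)) (τ : ℂ) : ℂ :=
  (((γ.1 0 0 : ℤ) : ℂ) * τ + ((γ.1 0 1 : ℤ) : ℂ)) /
    (((γ.1 1 0 : ℤ) : ℂ) * τ + ((γ.1 1 1 : ℤ) : ℂ))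

/-- `f` is a cusp form of (even) weight `w` for `Γ₀(N)` with Fourier coefficients `a`:
it is holomorphic on the upper half-plane, transforms with weight `w` under `Γ₀(N)`,
vanishes at every cusp, and has the absolutely convergent Fourier expansion
`f τ = ∑_{n ≥ 1} a n e^{2πinτ}`. -/
def IsCuspFormGamma0 (N : ℕ) (w : ℕ) (f : ℂ → ℂ) (a : ℕ → ℂ) : Prop :=
  DifferentiableOn ℂ f UHP ∧
  (∀ γ ∈ CongruenceSubgroup.Gamma0 N, ∀ τ ∈ UHP,
      f (moeb γ τ)
        = (((γ.1 1 0 : ℤ) : ℂ) * τ + ((γ.1 1 1 : ℤ) : ℂ)) ^ w * f τ) ∧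
  (∀ γ : SL(2, ℤ),
      Tendsto (fun τ : ℂ =>
          ((((γ.1 1 0 : ℤ) : ℂ) * τ + ((γ.1 1 1 : ℤ) : ℂ)) ^ (-(w : ℤ))) * f (moeb γ τ))
        (Filter.comap Complex.im Filter.atTop) (nhds 0)) ∧
  (∀ τ ∈ UHP,
      HasSum (fun n : ℕ => a (n + 1) * Complex.exp (2 * π * I * (n + 1) * τ)) (f τ)) ∧
  (∀ τ ∈ UHP,
      Summable (fun n : ℕ => ‖a (n + 1) * Complex.exp (2 * π * I * (n + 1) * τ)‖))

/-- The subgroup `Γ∞ = {(a b; 0 d) ∈ SL₂(ℤ)}` of upper triangular matrices. -/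
def GammaInf : Subgroup SL(2, ℤ) where
  carrier := {γ | γ.1 1 0 = 0}
  one_mem' := by simp
  mul_mem' := by
    intro x y hx hy
    have h := (Matrix.two_mul_expl x.1 y.1).2.2.1
    simp only [Set.mem_setOf_eq] at *
    simp [Matrix.SpecialLinearGroup.coe_mul, h, hx, hy]
  inv_mem' := by
    intro x hx
    simp only [Set.mem_setOf_eq] at *
    rw [Matrix.SpecialLinearGroup.SL2_inv_expl x]
    simpa using hx

private lemma jsq_aux (η x y : SL(2, ℤ)) (hyx : y = η * x) (hη10 : η.1 1 0 = 0) (τ : ℂ) :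
    (((x.1 1 0 : ℤ) : ℂ) * τ + ((x.1 1 1 : ℤ) : ℂ)) ^ 2
      = (((y.1 1 0 : ℤ) : ℂ) * τ + ((y.1 1 1 : ℤ) : ℂ)) ^ 2 := by
  have h10 : y.1 1 0 = η.1 1 1 * x.1 1 0 := by
    have h2 := (Matrix.two_mul_expl η.1 x.1).2.2.1
    rw [hyx]
    simp only [Matrix.SpecialLinearGroup.coe_mul]
    rw [h2, hη10]; ring
  have h11 : y.1 1 1 = η.1 1 1 * x.1 1 1 := by
    have h2 := (Matrix.two_mul_expl η.1 x.1).2.2.2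
    rw [hyx]
    simp only [Matrix.SpecialLinearGroup.coe_mul]
    rw [h2, hη10]; ring
  have hdet : η.1 0 0 * η.1 1 1 = 1 := by
    have hd := η.2
    rw [Matrix.det_fin_two] at hd
    rw [hη10] at hd; linarith
  have hsq : (((η.1 1 1 : ℤ) : ℂ)) ^ 2 = 1 := by
    have hdet' : η.1 1 1 * η.1 0 0 = 1 := by linarith
    rcases Int.eq_one_or_neg_one_of_mul_eq_one hdet' with h1 | h1 <;> rw [h1] <;> norm_num
  have hkey : ((y.1 1 0 : ℤ) : ℂ) * τ + ((y.1 1 1 : ℤ) : ℂ)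
      = ((η.1 1 1 : ℤ) : ℂ) * (((x.1 1 0 : ℤ) : ℂ) * τ + ((x.1 1 1 : ℤ) : ℂ)) := by
    rw [h10, h11]; push_cast; ring
  rw [hkey, mul_pow, hsq, one_mul]

/-- The square `j(γ,τ)² = (cτ+d)²` of the automorphy factor, as a well-defined function on
the set `Γ∞\Γ₀(N)` of right cosets `Γ∞γ`. -/
def jsqN (N : ℕ) (τ : ℂ) :
    Quotient (QuotientGroup.rightRel (GammaInf.subgroupOf (CongruenceSubgroup.Gamma0 N))) → ℂ :=
  Quotient.lift
    (fun γ : CongruenceSubgroup.Gamma0 N =>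
      (((γ.1.1 1 0 : ℤ) : ℂ) * τ + ((γ.1.1 1 1 : ℤ) : ℂ)) ^ 2)
    (by
      intro x y hxy
      have h : y * x⁻¹ ∈ GammaInf.subgroupOf (CongruenceSubgroup.Gamma0 N) :=
        QuotientGroup.rightRel_apply.mp hxy
      have hη : ((y * x⁻¹ : CongruenceSubgroup.Gamma0 N) : SL(2, ℤ)) ∈ GammaInf :=
        Subgroup.mem_subgroupOf.mp h
      exact jsq_aux ((y * x⁻¹ : CongruenceSubgroup.Gamma0 N) : SL(2, ℤ)) x.1 y.1
        (by push_cast; group) hη τ)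

/-- The weight-8 Eisenstein series
`E₈^{(N)}(τ) = ∑_{γ ∈ Γ∞\Γ₀(N)} j(γ,τ)^{-8}` attached to the cusp `∞` of `Γ₀(N)`
(written via `j(γ,τ)^{-8} = (j(γ,τ)²)^{-4}`). -/
def E8N (N : ℕ) (τ : ℂ) : ℂ :=
  ∑' q : Quotient (QuotientGroup.rightRel (GammaInf.subgroupOf (CongruenceSubgroup.Gamma0 N))),
    jsqN N τ q ^ (-4 : ℤ)

/-- The hyperbolic measure `d*τ = dx dy / y²` on the upper half-plane (as a measure on `ℂ`). -/
def hypMeasure : Measure ℂ :=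
  volume.withDensity fun τ => ENNReal.ofReal ((τ.im ^ 2)⁻¹)

/-- `F` is a measurable fundamental domain for the action of `Γ₀(N)` on the upper
half-plane: it is a measurable subset of `ℍ`, almost every point of `ℍ` has a
`Γ₀(N)`-translate in `F`, and distinct translates of `F` (by elements other than `±1`,
which act trivially) overlap in measure zero. -/
def IsFundamentalDomainGamma0 (N : ℕ) (F : Set ℂ) : Prop :=
  MeasurableSet F ∧ F ⊆ UHP ∧
  (∀ᵐ τ ∂(volume.restrict UHP), ∃ γ ∈ CongruenceSubgroup.Gamma0 N, moeb γ τ ∈ F) ∧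
  (∀ γ ∈ CongruenceSubgroup.Gamma0 N, γ ≠ 1 → γ ≠ -1 →
      volume (F ∩ {τ | moeb γ τ ∈ F}) = 0)

open scoped UpperHalfPlane

lemma coe_mem_UHP (τ : ℍ) : (τ : ℂ) ∈ UHP := τ.im_pos

lemma moeb_coe (γ : SL(2, ℤ)) (τ : ℍ) : moeb γ τ = ((γ • τ : ℍ) : ℂ) := by
  rw [UpperHalfPlane.coe_specialLinearGroup_apply]
  simp [moeb]

lemma automorphyFactor_ne_zero (γ : SL(2, ℤ)) (τ : ℍ) :
    ((γ.1 1 0 : ℤ) : ℂ) * (τ : ℂ) + ((γ.1 1 1 : ℤ) : ℂ) ≠ 0 := by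
  simpa [UpperHalfPlane.denom] using UpperHalfPlane.denom_ne_zero (γ : GL (Fin 2) ℝ) τ

/-- The Mathlib cusp form underlying a cusp form in the sense of `IsCuspFormGamma0`. -/
def IsCuspFormGamma0.toCuspForm {N w : ℕ} [NeZero N] {f : ℂ → ℂ} {a : ℕ → ℂ}
    (hf : IsCuspFormGamma0 N w f a) :
    CuspForm ((CongruenceSubgroup.Gamma0 N).map (Matrix.SpecialLinearGroup.mapGL ℝ)) w where
  toFun τ := f τ
  slash_action_eq' := by
    rintro _ ⟨γ, hγ, rfl⟩
    ext τ
    have hslash := ModularForm.SL_slash_apply (k := w) (fun τ : ℍ ↦ f τ) γ τ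
    refine hslash.trans ?_
    rw [← moeb_coe, hf.2.1 γ hγ τ (coe_mem_UHP τ)]
    have h0 := automorphyFactor_ne_zero γ τ
    simp only [UpperHalfPlane.denom, Matrix.SpecialLinearGroup.toGL, zpow_neg, zpow_natCast]
    simp
    field_simp
  holo' := by
    rw [UpperHalfPlane.mdifferentiable_iff]
    refine hf.1.congr fun z hz ↦ ?_
    have hz' : 0 < z.im := hz
    simp [UpperHalfPlane.ofComplex_apply_of_im_pos hz']
  zero_at_cusps' := by
    intro c hc
    rw [Subgroup.IsArithmetic.isCusp_iff_isCusp_SL2Z, isCusp_SL2Z_iff'] at hc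
    obtain ⟨γ, rfl⟩ := hc
    rw [OnePoint.isZeroAt_iff rfl]
    refine ((hf.2.2.1 γ).comp UpperHalfPlane.tendsto_coe_atImInfty).congr fun τ ↦ ?_
    refine Eq.trans ?_ (ModularForm.SL_slash_apply (k := w) (fun τ : ℍ ↦ f τ) γ τ).symm
    simp [UpperHalfPlane.denom, moeb_coe, mul_comm]

lemma qParam_one_pow (z : ℂ) (n : ℕ) :
    Function.Periodic.qParam 1 z ^ n = Complex.exp (2 * π * I * n * z) := by
  rw [Function.Periodic.qParam, ← Complex.exp_nat_mul]
  congr 1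
  push_cast
  ring

/-- The Hecke bound for the Fourier coefficients of a cusp form. -/
lemma IsCuspFormGamma0.exists_coeff_bound {N w : ℕ} [NeZero N] {f : ℂ → ℂ} {a : ℕ → ℂ}
    (hf : IsCuspFormGamma0 N (2 * w) f a) :
    ∃ C, 0 ≤ C ∧ ∀ n : ℕ, ‖a (n + 1)‖ ≤ C * ((n : ℝ) + 1) ^ w := by
  have hO := CuspFormClass.qExpansion_isBigO hf.toCuspForm
  rw [CongruenceSubgroup.strictWidthInfty_Gamma0] at hO
  obtain ⟨C, hC, hb⟩ := Asymptotics.bound_of_isBigO_nat_atTop hO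
  refine ⟨C, hC.le, fun n ↦ ?_⟩
  let c : ℕ → ℂ := fun n ↦ if n = 0 then 0 else a n
  have hc : ∀ τ : ℍ, HasSum (fun m ↦ c m • Function.Periodic.qParam 1 τ ^ m)
      (f τ) := by
    intro τ
    refine (hasSum_nat_add_iff' 1).mp ?_
    simpa [c, qParam_one_pow] using hf.2.2.2.1 τ (coe_mem_UHP τ)
  have hcoeff := ModularFormClass.qExpansion_coeff_unique (f := hf.toCuspForm) one_pos (by simp) hc
    (n + 1)
  have hpos : (0 : ℝ) < ((n + 1 : ℕ) : ℝ) := by positivity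
  have := hb (x := n + 1) (Real.rpow_pos_of_pos hpos _).ne'
  rw [← hcoeff, Real.norm_of_nonneg (Real.rpow_pos_of_pos hpos _).le] at this
  have hw : (((2 * w : ℕ) : ℤ) : ℝ) / 2 = (w : ℕ) := by push_cast; ring
  rw [hw, Real.rpow_natCast] at this
  simpa [c] using this

section Unfolding

variable {G α : Type*} [Group G] [Countable G] [MulAction G α] [MeasurableSpace α]
  [MeasurableConstSMul G α] {μ : Measure α} [SMulInvariantMeasure G α μ]

/-- Unfolding by double counting: if almost every `G`-orbit meets `F` through exactly `m` group
elements, then summing a function supported on `S` over orbits and integrating over `F` gives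
`m` times its integral over `S`. -/
lemma unfold_orbit_sum {F S : Set α} (hF : MeasurableSet F) (hS : MeasurableSet S)
    {h : α → ℂ} (hh : IntegrableOn h S μ) {m : ℕ} (hm : m ≠ 0)
    (hcount : ∀ᵐ x ∂μ, {γ : G | γ • x ∈ F}.ncard = m) :
    (∀ᵐ x ∂μ.restrict F, Summable fun γ : G ↦ S.indicator h (γ • x)) ∧
      ∫ x in F, ∑' γ : G, S.indicator h (γ • x) ∂μ = m * ∫ x in S, h x ∂μ := by
  set H : G → α → ℂ := fun γ x ↦ F.indicator (fun x ↦ S.indicator h (γ • x)) x with hH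
  set K : G → α → ℂ := fun γ x ↦ ((γ • ·) ⁻¹' F).indicator (S.indicator h) x with hK
  have hHK (γ : G) (x : α) : H γ⁻¹ x = K γ (γ⁻¹ • x) := by
    by_cases hx : x ∈ F <;> simp [hH, hK, hx]
  have hFγ (γ : G) : MeasurableSet ((γ • · : α → α) ⁻¹' F) := measurable_const_smul γ hF
  have hSint : Integrable (S.indicator h) μ := hh.integrable_indicator hS
  have hKint (γ : G) : Integrable (K γ) μ := hSint.indicator (hFγ γ)
  have hHint (γ : G) : Integrable (H γ) μ := by
    have := (measurePreserving_smul γ μ).integrable_comp_of_integrable (hKint γ⁻¹)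
    refine this.congr (Eventually.of_forall fun x ↦ ?_)
    simpa using (hHK γ⁻¹ x).symm
  have hKsum : ∀ᵐ x ∂μ, HasSum (fun γ ↦ K γ x) (m * S.indicator h x) := by
    filter_upwards [hcount] with x hx
    have hfin : {γ : G | γ • x ∈ F}.Finite := Set.finite_of_ncard_ne_zero (by simpa [hx])
    have : ∑ γ ∈ hfin.toFinset, K γ x = m * S.indicator h x := by
      rw [Finset.sum_congr rfl (g := fun _ ↦ S.indicator h x), Finset.sum_const,
        ← Set.ncard_eq_toFinset_card _ hfin, hx, nsmul_eq_mul]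
      intro γ hγ
      have hγ' : γ • x ∈ F := by simpa using hγ
      simp [hK, hγ']
    rw [← this]
    refine hasSum_sum_of_ne_finset_zero fun γ hγ ↦ ?_
    have hγ' : γ • x ∉ F := by simpa using hγ
    simp [hK, hγ']
  have hKsum' : ∀ᵐ x ∂μ, ∑' γ, ‖K γ x‖ₑ = m * ‖S.indicator h x‖ₑ := by
    filter_upwards [hcount] with x hx
    have hfin : {γ : G | γ • x ∈ F}.Finite := Set.finite_of_ncard_ne_zero (by simpa [hx])
    rw [tsum_eq_sum (s := hfin.toFinset), Finset.sum_congr rfl (g := fun _ ↦ ‖S.indicator h x‖ₑ),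
      Finset.sum_const, ← Set.ncard_eq_toFinset_card _ hfin, hx, nsmul_eq_mul]
    · intro γ hγ
      have hγ' : γ • x ∈ F := by simpa using hγ
      simp [hK, hγ']
    · intro γ hγ
      have hγ' : γ • x ∉ F := by simpa using hγ
      simp [hK, hγ']
  have hKfin : ∑' γ, ∫⁻ x, ‖K γ x‖ₑ ∂μ ≠ ⊤ := by
    rw [← lintegral_tsum fun γ ↦ (hKint γ).1.enorm, lintegral_congr_ae hKsum',
      lintegral_const_mul' _ _ (by simp)]
    exact ENNReal.mul_ne_top (by simp) hSint.2.ne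
  have hHfin : ∑' γ, ∫⁻ x, ‖H γ x‖ₑ ∂μ ≠ ⊤ := by
    rw [← (Equiv.inv G).tsum_eq]
    convert hKfin using 3 with γ
    simp only [Equiv.inv_apply, hHK]
    exact (measurePreserving_smul γ⁻¹ μ).lintegral_comp_emb (measurableEmbedding_const_smul _)
      fun x ↦ ‖K γ x‖ₑ
  refine ⟨?_, ?_⟩
  · rw [ae_restrict_iff' hF]
    rw [← lintegral_tsum fun γ ↦ (hHint γ).1.enorm] at hHfin
    filter_upwards [ae_lt_top' (AEMeasurable.tsum fun γ ↦ (hHint γ).1.enorm) hHfin]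
      with x hx hxF
    have : Summable fun γ ↦ ‖H γ x‖ₑ.toReal := ENNReal.summable_toReal hx.ne
    refine Summable.of_norm ?_
    simpa [hH, hxF] using this
  · calc ∫ x in F, ∑' γ : G, S.indicator h (γ • x) ∂μ
        = ∫ x, ∑' γ, H γ x ∂μ := by
          rw [← integral_indicator hF]
          congr with x
          by_cases hx : x ∈ F <;> simp [hH, hx]
      _ = ∑' γ, ∫ x, H γ x ∂μ := integral_tsum (fun γ ↦ (hHint γ).1) hHfin
      _ = ∑' γ, ∫ x, K γ x ∂μ := by
          rw [← (Equiv.inv G).tsum_eq]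
          congr with γ
          simp only [Equiv.inv_apply, hHK]
          exact (measurePreserving_smul γ⁻¹ μ).integral_comp (measurableEmbedding_const_smul _) _
      _ = ∫ x, ∑' γ, K γ x ∂μ := (integral_tsum (fun γ ↦ (hKint γ).1) hKfin).symm
      _ = ∫ x, m * S.indicator h x ∂μ :=
          integral_congr_ae (hKsum.mono fun x hx ↦ hx.tsum_eq)
      _ = m * ∫ x in S, h x ∂μ := by rw [integral_const_mul, integral_indicator hS]

end Unfolding

section Action

instance : Countable SL(2, ℤ) :=
  haveI : Countable (Matrix (Fin 2) (Fin 2) ℤ) := inferInstanceAs (Countable (Fin 2 → Fin 2 → ℤ))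
  Subtype.val_injective.countable

instance : MeasurableConstSMul SL(2, ℤ) ℍ :=
  ⟨fun γ ↦ measurable_const_smul (Matrix.SpecialLinearGroup.mapGL ℝ γ)⟩

instance : SMulInvariantMeasure SL(2, ℤ) ℍ volume :=
  ⟨fun γ _ hs ↦ measure_preimage_smul_of_nullMeasurableSet hs.nullMeasurableSet
    (Matrix.SpecialLinearGroup.mapGL ℝ γ)⟩

lemma range_coe_upperHalfPlane : Set.range UpperHalfPlane.coe = UHP := by
  ext z
  exact ⟨fun ⟨τ, h⟩ ↦ h ▸ coe_mem_UHP τ, fun h ↦ ⟨⟨z, h⟩, rfl⟩⟩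

lemma measurableSet_UHP : MeasurableSet UHP :=
  measurableSet_lt measurable_const Complex.measurable_im

/-- The invariant measure of `ℍ` corresponds to the hyperbolic measure on `UHP`. -/
lemma measurePreserving_coe_hypMeasure :
    MeasurePreserving UpperHalfPlane.coe volume (hypMeasure.restrict UHP) := by
  refine ⟨UpperHalfPlane.measurable_coe, ?_⟩
  ext s hs
  rw [Measure.map_apply UpperHalfPlane.measurable_coe hs, UpperHalfPlane.volume_eq_lintegral,
    Set.image_preimage_eq_inter_range, range_coe_upperHalfPlane, Measure.restrict_apply hs,
    hypMeasure, withDensity_apply _ (hs.inter measurableSet_UHP)]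
  refine lintegral_congr fun z ↦ ?_
  rw [ENNReal.ofReal, ENNReal.coe_inj]
  ext
  rw [Real.coe_toNNReal _ (by positivity)]
  simp

lemma setIntegral_hypMeasure {F : Set ℂ} (hF : MeasurableSet F) (hFU : F ⊆ UHP) (φ : ℂ → ℂ) :
    ∫ τ in F, φ τ ∂hypMeasure = ∫ τ in UpperHalfPlane.coe ⁻¹' F, φ (τ : ℂ) := by
  rw [measurePreserving_coe_hypMeasure.setIntegral_preimage_emb
    UpperHalfPlane.measurableEmbedding_coe, Measure.restrict_restrict hF,
    Set.inter_eq_left.mpr hFU]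

lemma ae_upperHalfPlane {p : ℂ → Prop} (h : ∀ᵐ z ∂volume.restrict UHP, p z) :
    ∀ᵐ τ : ℍ, p τ := by
  refine measurePreserving_coe_hypMeasure.quasiMeasurePreserving.ae ?_
  exact ((withDensity_absolutelyContinuous _ _).restrict UHP).ae_le h

lemma neg_one_mem_Gamma0 (N : ℕ) : -1 ∈ CongruenceSubgroup.Gamma0 N := by
  simp [CongruenceSubgroup.Gamma0_mem]

lemma neg_ne_self_SL (γ : SL(2, ℤ)) : -γ ≠ γ := by
  intro h
  have hij (i j : Fin 2) : γ.1 i j = 0 := by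
    have := congrArg (fun δ : SL(2, ℤ) ↦ δ.1 i j) h
    simp only [Matrix.SpecialLinearGroup.coe_neg, Matrix.neg_apply] at this
    omega
  have hdet := γ.2
  rw [Matrix.det_fin_two, hij, hij 0 1] at hdet
  simp at hdet

/-- Negation on `Γ₀(N)`. -/
def Gamma0Neg {N : ℕ} (γ : CongruenceSubgroup.Gamma0 N) : CongruenceSubgroup.Gamma0 N :=
  ⟨-γ.1, by simpa using mul_mem (neg_one_mem_Gamma0 N) γ.2⟩

lemma ncard_pair_Gamma0Neg {N : ℕ} (γ : CongruenceSubgroup.Gamma0 N) :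
    ({γ, Gamma0Neg γ} : Set (CongruenceSubgroup.Gamma0 N)).ncard = 2 :=
  Set.ncard_pair fun h ↦ neg_ne_self_SL γ.1 (congrArg Subtype.val h).symm

/-- Almost every point of `ℍ` is moved into a fundamental domain by exactly two elements of
`Γ₀(N)`. -/
lemma IsFundamentalDomainGamma0.ae_ncard_eq_two {N : ℕ} {F : Set ℂ}
    (hF : IsFundamentalDomainGamma0 N F) :
    ∀ᵐ τ : ℍ, {γ : CongruenceSubgroup.Gamma0 N | γ • τ ∈ UpperHalfPlane.coe ⁻¹' F}.ncard = 2 := by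
  obtain ⟨-, -, hcov, hdisj⟩ := hF
  have hnull : ∀ᵐ τ : ℍ, ∀ γ δ : CongruenceSubgroup.Gamma0 N, δ.1 ≠ 1 → δ.1 ≠ -1 →
      ¬ (((γ • τ : ℍ) : ℂ) ∈ F ∧ moeb δ.1 ((γ • τ : ℍ) : ℂ) ∈ F) := by
    rw [ae_all_iff]
    intro γ
    rw [ae_all_iff]
    intro δ
    rcases eq_or_ne δ.1 1 with h1 | h1
    · simp [h1]
    rcases eq_or_ne δ.1 (-1) with h2 | h2
    · simp [h2]
    have hz : ∀ᵐ z : ℂ, ¬ (z ∈ F ∧ moeb δ.1 z ∈ F) :=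
      measure_eq_zero_iff_ae_notMem.mp (hdisj δ.1 δ.2 h1 h2)
    have hτ : ∀ᵐ τ : ℍ, ¬ ((τ : ℂ) ∈ F ∧ moeb δ.1 τ ∈ F) :=
      ae_upperHalfPlane (ae_restrict_of_ae hz)
    filter_upwards [(measurePreserving_smul γ.1 (volume : Measure ℍ)).quasiMeasurePreserving.ae hτ]
      with τ h _ _ using h
  filter_upwards [ae_upperHalfPlane hcov, hnull] with τ ⟨γ₀, hγ₀, hmem⟩ hτ
  convert ncard_pair_Gamma0Neg (⟨γ₀, hγ₀⟩ : CongruenceSubgroup.Gamma0 N)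
  rw [moeb_coe] at hmem
  ext γ
  constructor
  · intro hγ
    by_contra hne
    simp only [Set.mem_insert_iff, Set.mem_singleton_iff, not_or] at hne
    refine hτ ⟨γ₀, hγ₀⟩ (γ * (⟨γ₀, hγ₀⟩ : CongruenceSubgroup.Gamma0 N)⁻¹) ?_ ?_ ⟨hmem, ?_⟩
    · intro h
      refine hne.1 (Subtype.ext ?_)
      exact mul_inv_eq_one.mp h
    · intro h
      refine hne.2 (Subtype.ext ?_)
      have h' : γ.1 * γ₀⁻¹ = -1 := h
      rw [mul_inv_eq_iff_eq_mul] at h'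
      simpa [Gamma0Neg] using h'
    · rw [moeb_coe]
      have : (γ * (⟨γ₀, hγ₀⟩ : CongruenceSubgroup.Gamma0 N)⁻¹).1 •
          ((⟨γ₀, hγ₀⟩ : CongruenceSubgroup.Gamma0 N) • τ) = γ • τ := by
        change (γ.1 * γ₀⁻¹) • γ₀ • τ = γ.1 • τ
        rw [mul_smul, inv_smul_smul]
      rw [this]
      exact hγ
  · rintro (rfl | rfl)
    · exact hmem
    · change (((-γ₀) • τ : ℍ) : ℂ) ∈ F
      rwa [ModularGroup.SL_neg_smul]

end Action

section Strip

/-- The strip `0 < Re τ ≤ 1`, a fundamental domain for `Γ∞`. -/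
def strip : Set ℍ := {τ | τ.re ∈ Set.Ioc 0 1}

lemma measurableSet_strip : MeasurableSet strip :=
  UpperHalfPlane.continuous_re.measurable measurableSet_Ioc

lemma eq_T_zpow_or_neg_of_mem_GammaInf {η : SL(2, ℤ)} (hη : η ∈ GammaInf) :
    ∃ n : ℤ, η = ModularGroup.T ^ n ∨ η = -ModularGroup.T ^ n := by
  have h10 : η.1 1 0 = 0 := hη
  have hdet := η.2
  rw [Matrix.det_fin_two, h10, mul_zero, sub_zero] at hdet
  rcases Int.eq_one_or_neg_one_of_mul_eq_one' hdet with ⟨h0, h1⟩ | ⟨h0, h1⟩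
  · refine ⟨η.1 0 1, Or.inl ?_⟩
    ext i j
    rw [ModularGroup.coe_T_zpow]
    fin_cases i <;> fin_cases j <;> simp [h0, h1, h10]
  · refine ⟨-η.1 0 1, Or.inr ?_⟩
    ext i j
    rw [Matrix.SpecialLinearGroup.coe_neg, ModularGroup.coe_T_zpow]
    fin_cases i <;> fin_cases j <;> simp [h0, h1, h10]

lemma T_zpow_mem_GammaInf (n : ℤ) : ModularGroup.T ^ n ∈ GammaInf := by
  change (ModularGroup.T ^ n).1 1 0 = 0
  simp [ModularGroup.coe_T_zpow]

lemma GammaInf_neg_mem {η : SL(2, ℤ)} (hη : η ∈ GammaInf) : -η ∈ GammaInf := by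
  change (-η).1 1 0 = 0
  simpa using show η.1 1 0 = 0 from hη

lemma GammaInf_le_Gamma0 (N : ℕ) : GammaInf ≤ CongruenceSubgroup.Gamma0 N := by
  intro η hη
  have h10 : η.1 1 0 = 0 := hη
  simp [CongruenceSubgroup.Gamma0_mem, h10]

/-- The set `Γ∞\Γ₀(N)`. -/
abbrev CuspCosets (N : ℕ) : Type :=
  Quotient (QuotientGroup.rightRel (GammaInf.subgroupOf (CongruenceSubgroup.Gamma0 N)))

lemma ncard_coset_strip {N : ℕ} (q : CuspCosets N) (τ : ℍ) :
    {γ : CongruenceSubgroup.Gamma0 N | (Quotient.mk _ γ : CuspCosets N) = q ∧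
      γ • τ ∈ strip}.ncard = 2 := by
  obtain ⟨γ₀, rfl⟩ := Quotient.exists_rep q
  obtain ⟨n, hn, huniq⟩ := existsUnique_add_zsmul_mem_Ioc (one_pos (α := ℝ)) (γ₀ • τ).re 0
  simp only [zsmul_eq_mul, mul_one, zero_add] at hn huniq
  let γ₁ : CongruenceSubgroup.Gamma0 N :=
    ⟨ModularGroup.T ^ n * γ₀.1, mul_mem (GammaInf_le_Gamma0 N (T_zpow_mem_GammaInf n)) γ₀.2⟩
  have hre (m : ℤ) : ((ModularGroup.T ^ m * γ₀.1) • τ).re = (γ₀ • τ).re + m := by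
    rw [mul_smul, UpperHalfPlane.modular_T_zpow_smul, UpperHalfPlane.vadd_re, add_comm]
    rfl
  have hrel (γ : CongruenceSubgroup.Gamma0 N) :
      (Quotient.mk _ γ : CuspCosets N) = Quotient.mk _ γ₀ ↔ γ₀.1 * γ.1⁻¹ ∈ GammaInf := by
    rw [Quotient.eq, QuotientGroup.rightRel_apply, Subgroup.mem_subgroupOf]
    rfl
  convert ncard_pair_Gamma0Neg γ₁
  ext γ
  simp only [Set.mem_ofPred_eq, hrel, Set.mem_insert_iff, Set.mem_singleton_iff, Subtype.ext_iff]
  constructor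
  · rintro ⟨hγ, hS⟩
    have hγ' : γ.1 * γ₀.1⁻¹ ∈ GammaInf := by simpa using inv_mem hγ
    obtain ⟨m, hm | hm⟩ := eq_T_zpow_or_neg_of_mem_GammaInf hγ'
    · rw [mul_inv_eq_iff_eq_mul] at hm
      have : γ • τ = (ModularGroup.T ^ m * γ₀.1) • τ := by rw [← hm]; rfl
      rw [this] at hS
      have hS' : ((ModularGroup.T ^ m * γ₀.1) • τ).re ∈ Set.Ioc 0 1 := hS
      rw [hre] at hS'
      exact Or.inl (hm.trans (by rw [huniq m hS']))
    · rw [mul_inv_eq_iff_eq_mul, neg_mul] at hm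
      have : γ • τ = (ModularGroup.T ^ m * γ₀.1) • τ := by
        rw [← ModularGroup.SL_neg_smul, ← hm]; rfl
      rw [this] at hS
      have hS' : ((ModularGroup.T ^ m * γ₀.1) • τ).re ∈ Set.Ioc 0 1 := hS
      rw [hre] at hS'
      exact Or.inr (hm.trans (by rw [huniq m hS']; rfl))
  · have hmem : γ₁.1 • τ ∈ strip := by
      change ((ModularGroup.T ^ n * γ₀.1) • τ).re ∈ Set.Ioc 0 1
      rwa [hre]
    rintro (h | h)
    · refine ⟨?_, ?_⟩
      · rw [h]
        simpa [γ₁] using inv_mem (T_zpow_mem_GammaInf n)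
      · change γ.1 • τ ∈ strip
        rwa [h]
    · refine ⟨?_, ?_⟩
      · rw [h, ← inv_mem_iff]
        simpa [γ₁, Gamma0Neg] using GammaInf_neg_mem (T_zpow_mem_GammaInf n)
      · change γ.1 • τ ∈ strip
        rw [h]
        change (-γ₁.1) • τ ∈ strip
        rwa [ModularGroup.SL_neg_smul]

/-- The orbit sum over `Γ₀(N)` of the restriction to the strip of a function transforming by
`j(γ,τ)^{-8}` is twice its product with the Eisenstein series. -/
lemma tsum_strip_eq_E8N_mul {N : ℕ} {h : ℍ → ℂ} {τ : ℍ}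
    (hinv : ∀ γ : CongruenceSubgroup.Gamma0 N,
      h (γ • τ) = jsqN N τ (Quotient.mk _ γ) ^ (-4 : ℤ) * h τ)
    (hsum : Summable fun γ : CongruenceSubgroup.Gamma0 N ↦ strip.indicator h (γ • τ)) :
    ∑' γ : CongruenceSubgroup.Gamma0 N, strip.indicator h (γ • τ) = 2 * (E8N N τ * h τ) := by
  have hfib := hsum.hasSum.tsum_fiberwise
    (fun γ : CongruenceSubgroup.Gamma0 N ↦ (Quotient.mk _ γ : CuspCosets N))
  rw [← hfib.tsum_eq, E8N, ← tsum_mul_right, ← tsum_mul_left]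
  refine tsum_congr fun q ↦ ?_
  rw [tsum_subtype
    ((fun γ : CongruenceSubgroup.Gamma0 N ↦ (Quotient.mk _ γ : CuspCosets N)) ⁻¹' {q})
    (fun γ : CongruenceSubgroup.Gamma0 N ↦ strip.indicator h (γ • τ))]
  have hind : (((fun γ : CongruenceSubgroup.Gamma0 N ↦ (Quotient.mk _ γ : CuspCosets N)) ⁻¹'
      {q}).indicator fun γ : CongruenceSubgroup.Gamma0 N ↦ strip.indicator h (γ • τ)) =
      {γ : CongruenceSubgroup.Gamma0 N | (Quotient.mk _ γ : CuspCosets N) = q ∧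
        γ • τ ∈ strip}.indicator fun _ ↦ jsqN N τ q ^ (-4 : ℤ) * h τ := by
    ext γ
    by_cases hq : (Quotient.mk _ γ : CuspCosets N) = q
    · by_cases hS : γ • τ ∈ strip
      · simp [hq, hS, hinv]
      · simp [hq, hS]
    · simp [hq]
  rw [hind, ← tsum_subtype _ (fun _ : CongruenceSubgroup.Gamma0 N ↦ jsqN N τ q ^ (-4 : ℤ) * h τ),
    tsum_const]
  change ({γ : CongruenceSubgroup.Gamma0 N | (Quotient.mk _ γ : CuspCosets N) = q ∧
        γ • τ ∈ strip}.ncard) • _ = _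
  rw [ncard_coset_strip]
  simp

end Strip

section StripIntegral

/-- Termwise integration of an almost everywhere convergent series. -/
lemma integrable_and_hasSum_integral {α ι E : Type*} [MeasurableSpace α] [Countable ι]
    [NormedAddCommGroup E] [NormedSpace ℝ E] {μ : Measure α} {u : ι → α → E} {s : α → E}
    (hu : ∀ i, Integrable (u i) μ) (hnorm : Summable fun i ↦ ∫ x, ‖u i x‖ ∂μ)
    (hs : ∀ᵐ x ∂μ, HasSum (fun i ↦ u i x) (s x)) :
    Integrable s μ ∧ HasSum (fun i ↦ ∫ x, u i x ∂μ) (∫ x, s x ∂μ) := by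
  refine ⟨⟨?_, ?_⟩, ?_⟩
  · exact aestronglyMeasurable_of_tendsto_ae atTop
      (fun t : Finset ι ↦ (integrable_finsetSum t fun i _ ↦ hu i).aestronglyMeasurable) hs
  · have hle : ∀ᵐ x ∂μ, ‖s x‖ₑ ≤ ∑' i, ‖u i x‖ₑ := by
      filter_upwards [hs] with x hx
      rw [← hx.tsum_eq]
      exact enorm_tsum_le_tsum_enorm
    refine (lintegral_mono_ae hle).trans_lt ?_
    rw [lintegral_tsum fun i ↦ (hu i).aestronglyMeasurable.enorm]
    have heq (i : ι) : ∫⁻ x, ‖u i x‖ₑ ∂μ = ENNReal.ofReal (∫ x, ‖u i x‖ ∂μ) :=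
      (ofReal_integral_norm_eq_lintegral_enorm (hu i)).symm
    simp_rw [heq]
    exact hnorm.tsum_ofReal_lt_top
  · have h := hasSum_integral_of_summable_integral_norm hu hnorm
    rwa [integral_congr_ae (hs.mono fun x hx ↦ hx.tsum_eq)] at h

/-- The real and imaginary part of a point of the upper half-plane. -/
def reIm (τ : ℍ) : ℝ × ℝ := (τ.re, τ.im)

lemma measurableEmbedding_reIm : MeasurableEmbedding reIm :=
  Complex.measurableEquivRealProd.measurableEmbedding.comp UpperHalfPlane.measurableEmbedding_coe

/-- The measure `dy / y²` on the positive half-line. -/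
def heightMeasure : Measure ℝ :=
  (volume.restrict (Set.Ioi 0)).withDensity fun y ↦ ENNReal.ofReal ((y ^ 2)⁻¹)

instance : SFinite heightMeasure := by
  unfold heightMeasure
  infer_instance

lemma measurePreserving_reIm_strip :
    MeasurePreserving reIm (volume.restrict strip)
      ((volume.restrict (Set.Ioc 0 1)).prod heightMeasure) := by
  have hd : Measurable fun y : ℝ ↦ ENNReal.ofReal ((y ^ 2)⁻¹) := by fun_prop
  have hS : MeasurableSet (Set.Ioc (0 : ℝ) 1 ×ˢ Set.Ioi (0 : ℝ)) :=
    measurableSet_Ioc.prod measurableSet_Ioi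
  have h1 : MeasurePreserving Complex.measurableEquivRealProd hypMeasure
      ((volume : Measure (ℝ × ℝ)).withDensity fun z ↦ ENNReal.ofReal ((z.2 ^ 2)⁻¹)) := by
    refine ⟨Complex.measurableEquivRealProd.measurable, ?_⟩
    ext s hs
    rw [Complex.measurableEquivRealProd.map_apply, withDensity_apply _ hs, hypMeasure,
      withDensity_apply _ (Complex.measurableEquivRealProd.measurable hs)]
    exact Complex.volume_preserving_equiv_real_prod.setLIntegral_comp_preimage_emb
      Complex.measurableEquivRealProd.measurableEmbedding
      (fun z : ℝ × ℝ ↦ ENNReal.ofReal ((z.2 ^ 2)⁻¹)) s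
  have h2 := h1.restrict_preimage_emb Complex.measurableEquivRealProd.measurableEmbedding
    (Set.Ioc (0 : ℝ) 1 ×ˢ Set.Ioi (0 : ℝ))
  have h3 := measurePreserving_coe_hypMeasure.restrict_preimage_emb
    UpperHalfPlane.measurableEmbedding_coe
    (Complex.measurableEquivRealProd ⁻¹' (Set.Ioc (0 : ℝ) 1 ×ˢ Set.Ioi (0 : ℝ)))
  rw [Measure.restrict_restrict (Complex.measurableEquivRealProd.measurable hS),
    Set.inter_eq_left.mpr fun z hz ↦ hz.2] at h3
  have h4 := h2.comp h3
  rw [heightMeasure, prod_withDensity_right hd, Measure.prod_restrict,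
    ← restrict_withDensity hS]
  have hstrip : strip = UpperHalfPlane.coe ⁻¹' (Complex.measurableEquivRealProd ⁻¹'
      (Set.Ioc (0 : ℝ) 1 ×ˢ Set.Ioi (0 : ℝ))) := by
    ext τ
    exact ⟨fun h ↦ ⟨h, τ.im_pos⟩, fun h ↦ h.1⟩
  rw [hstrip]
  exact h4

lemma integrable_heightMeasure_iff {ψ : ℝ → ℂ} :
    Integrable ψ heightMeasure ↔
      IntegrableOn (fun y ↦ (((y ^ 2)⁻¹ : ℝ) : ℂ) * ψ y) (Set.Ioi 0) := by
  rw [heightMeasure, integrable_withDensity_iff_integrable_smul' (by fun_prop) (by simp)]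
  refine integrable_congr (ae_of_all _ fun y ↦ ?_)
  simp only [ENNReal.toReal_ofReal (inv_nonneg.mpr (sq_nonneg y)), Complex.real_smul]

lemma integral_heightMeasure (ψ : ℝ → ℂ) :
    ∫ y, ψ y ∂heightMeasure = ∫ y in Set.Ioi 0, (((y ^ 2)⁻¹ : ℝ) : ℂ) * ψ y := by
  rw [heightMeasure, integral_withDensity_eq_integral_toReal_smul (by fun_prop) (by simp)]
  refine integral_congr_ae (ae_of_all _ fun y ↦ ?_)
  simp only [ENNReal.toReal_ofReal (inv_nonneg.mpr (sq_nonneg y)), Complex.real_smul]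

lemma integral_pow_mul_exp_neg_mul_Ioi (m : ℕ) {r : ℝ} (hr : 0 < r) :
    ∫ y in Set.Ioi (0 : ℝ), y ^ m * Real.exp (-(r * y)) =
      (r ^ (m + 1))⁻¹ * Real.Gamma (m + 1) := by
  have h := Real.integral_rpow_mul_exp_neg_mul_Ioi (a := (m : ℝ) + 1) (by positivity) hr
  simp only [add_sub_cancel_right, Real.rpow_natCast] at h
  rw [h, ← Nat.cast_succ, Real.rpow_natCast, one_div, inv_pow]

/-- The profile `y ^ (m + 2) e^{-ry}` integrates against `dy / y²` to a Gamma factor. -/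
lemma integrable_and_integral_height (m : ℕ) {r : ℝ} (hr : 0 < r) :
    Integrable (fun y : ℝ ↦ ((y ^ (m + 2) * Real.exp (-(r * y)) : ℝ) : ℂ)) heightMeasure ∧
      ∫ y, ((y ^ (m + 2) * Real.exp (-(r * y)) : ℝ) : ℂ) ∂heightMeasure =
        (((r ^ (m + 1))⁻¹ * Real.Gamma (m + 1) : ℝ) : ℂ) := by
  have heq : Set.EqOn (fun y : ℝ ↦ (((y ^ 2)⁻¹ : ℝ) : ℂ) *
      ((y ^ (m + 2) * Real.exp (-(r * y)) : ℝ) : ℂ))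
      (fun y : ℝ ↦ ((y ^ m * Real.exp (-(r * y)) : ℝ) : ℂ)) (Set.Ioi 0) := by
    intro y hy
    have hy' : y ≠ 0 := ne_of_gt hy
    simp only [← Complex.ofReal_mul]
    congr 1
    field_simp
    ring
  have hI := integral_pow_mul_exp_neg_mul_Ioi m hr
  constructor
  · rw [integrable_heightMeasure_iff, integrableOn_congr_fun heq measurableSet_Ioi]
    refine Integrable.ofReal (f := fun y : ℝ ↦ y ^ m * Real.exp (-(r * y))) ?_
    refine not_imp_comm.mp integral_undef ?_
    rw [hI]
    have : 0 < Real.Gamma (m + 1) := Real.Gamma_pos_of_pos (by positivity)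
    positivity
  · rw [integral_heightMeasure, setIntegral_congr_fun measurableSet_Ioi heq,
      integral_complex_ofReal, hI]

lemma integral_exp_two_pi_int_mul (n : ℤ) :
    ∫ x in Set.Ioc (0 : ℝ) 1, Complex.exp (2 * π * I * n * x) = if n = 0 then 1 else 0 := by
  rw [← intervalIntegral.integral_of_le zero_le_one]
  split_ifs with h
  · simp [h]
  · have h0 : 2 * π * I * (n : ℂ) ≠ 0 := by simp [h, Real.pi_ne_zero]
    rw [integral_exp_mul_complex h0]
    have : 2 * π * I * (n : ℂ) * ((1 : ℝ) : ℂ) = n * (2 * π * I) := by push_cast; ring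
    rw [this, Complex.exp_int_mul_two_pi_mul_I]
    simp

lemma integrableOn_exp_two_pi_int_mul (n : ℤ) :
    IntegrableOn (fun x : ℝ ↦ Complex.exp (2 * π * I * n * x)) (Set.Ioc 0 1) :=
  (Continuous.intervalIntegrable (by fun_prop) 0 1).1

lemma exp_mul_conj_exp (n m : ℕ) (τ : ℍ) :
    Complex.exp (2 * π * I * (n + 1) * τ) * conj (Complex.exp (2 * π * I * (m + 1) * τ)) =
      Complex.exp (2 * π * I * ((n - m : ℤ) : ℂ) * τ.re) *
        ((Real.exp (-((2 * π * (n + m + 2)) * τ.im)) : ℝ) : ℂ) := by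
  rw [← Complex.exp_conj, ← Complex.exp_add, Complex.ofReal_exp, ← Complex.exp_add]
  congr 1
  have hτ : (τ : ℂ) = τ.re + τ.im * I := (Complex.re_add_im (τ : ℂ)).symm
  rw [hτ]
  simp only [map_mul, map_add, Complex.conj_ofReal, Complex.conj_I, map_natCast, map_one,
    map_ofNat]
  push_cast
  linear_combination (2 * π * (n + m + 2) * τ.im) * Complex.I_sq

/-- The profile of a product of two Fourier monomials is integrable over the strip, and its
integral vanishes off the diagonal. -/
lemma integrableOn_and_integral_strip (l : ℤ) (m : ℕ) {r : ℝ} (hr : 0 < r) :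
    IntegrableOn (fun τ : ℍ ↦ Complex.exp (2 * π * I * l * τ.re) *
        ((τ.im ^ (m + 2) * Real.exp (-(r * τ.im)) : ℝ) : ℂ)) strip ∧
      ∫ τ in strip, Complex.exp (2 * π * I * l * τ.re) *
        ((τ.im ^ (m + 2) * Real.exp (-(r * τ.im)) : ℝ) : ℂ) =
        (if l = 0 then 1 else 0) * (((r ^ (m + 1))⁻¹ * Real.Gamma (m + 1) : ℝ) : ℂ) := by
  obtain ⟨hIntegrable, hval⟩ := integrable_and_integral_height m hr
  constructor
  · exact (measurePreserving_reIm_strip.integrable_comp_emb measurableEmbedding_reIm).mpr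
      ((integrableOn_exp_two_pi_int_mul l).mul_prod hIntegrable)
  · have h := measurePreserving_reIm_strip.integral_comp measurableEmbedding_reIm
      (fun z : ℝ × ℝ ↦ Complex.exp (2 * π * I * l * z.1) *
        ((z.2 ^ (m + 2) * Real.exp (-(r * z.2)) : ℝ) : ℂ))
    rw [integral_prod_mul (fun x : ℝ ↦ Complex.exp (2 * π * I * l * x))
      (fun y : ℝ ↦ ((y ^ (m + 2) * Real.exp (-(r * y)) : ℝ) : ℂ)),
      integral_exp_two_pi_int_mul, hval] at h
    exact h

lemma integral_norm_strip (l : ℤ) (m : ℕ) {r : ℝ} (hr : 0 < r) :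
    ∫ τ in strip, ‖Complex.exp (2 * π * I * l * τ.re) *
        ((τ.im ^ (m + 2) * Real.exp (-(r * τ.im)) : ℝ) : ℂ)‖ =
      (r ^ (m + 1))⁻¹ * Real.Gamma (m + 1) := by
  have h := (integrableOn_and_integral_strip 0 m hr).2
  simp only [Int.cast_zero, mul_zero, zero_mul, Complex.exp_zero, one_mul, if_true] at h
  rw [integral_complex_ofReal] at h
  rw [← Complex.ofReal_injective h]
  congr 1
  ext τ
  have hnn : 0 ≤ τ.im ^ (m + 2) * Real.exp (-(r * τ.im)) := by
    have := τ.im_pos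
    positivity
  have harg : 2 * π * I * (l : ℂ) * τ.re = ((2 * π * l * τ.re : ℝ) : ℂ) * I := by
    push_cast; ring
  rw [norm_mul, harg, Complex.norm_exp_ofReal_mul_I, one_mul, Complex.norm_real,
    Real.norm_of_nonneg hnn]

lemma summable_mul_inv_add_pow {k l : ℕ} {a b : ℕ → ℝ} {A B : ℝ}
    (ha0 : ∀ n, 0 ≤ a n) (hb0 : ∀ n, 0 ≤ b n)
    (ha : ∀ n : ℕ, a n ≤ A * ((n : ℝ) + 1) ^ k) (hb : ∀ n : ℕ, b n ≤ B * ((n : ℝ) + 1) ^ l)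
    (hA : 0 ≤ A) (hB : 0 ≤ B) :
    Summable fun p : ℕ × ℕ ↦ a p.1 * b p.2 * (((p.1 : ℝ) + p.2 + 2) ^ (k + l + 3))⁻¹ := by
  have hs : Summable fun n : ℕ ↦ (((n : ℝ) + 1) ^ (3 / 2 : ℝ))⁻¹ := by
    have := (Real.summable_nat_rpow_inv (p := 3 / 2)).mpr (by norm_num)
    simpa using (summable_nat_add_iff 1).mpr this
  have hs2 := (hs.mul_of_nonneg hs (fun n ↦ by positivity) (fun n ↦ by positivity)).mul_left
    (A * B)
  refine hs2.of_nonneg_of_le (fun p ↦ ?_) fun ⟨n, m⟩ ↦ ?_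
  · have := ha0 p.1
    have := hb0 p.2
    positivity
  · dsimp only
    set s : ℝ := (n : ℝ) + m + 2
    have hn : (n : ℝ) + 1 ≤ s := by simp only [s]; linarith [m.cast_nonneg (α := ℝ)]
    have hm : (m : ℝ) + 1 ≤ s := by simp only [s]; linarith [n.cast_nonneg (α := ℝ)]
    have hs0 : 0 < s := by positivity
    have h1 : a n * b m ≤ (A * s ^ k) * (B * s ^ l) :=
      mul_le_mul ((ha n).trans (by gcongr)) ((hb m).trans (by gcongr)) (hb0 m) (by positivity)
    have h2 : ((n : ℝ) + 1) ^ (3 / 2 : ℝ) * ((m : ℝ) + 1) ^ (3 / 2 : ℝ) ≤ s ^ 3 := by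
      calc _ ≤ s ^ (3 / 2 : ℝ) * s ^ (3 / 2 : ℝ) := by gcongr
        _ = s ^ 3 := by
          rw [← Real.rpow_add hs0, ← Real.rpow_natCast]
          norm_num
    calc a n * b m * (s ^ (k + l + 3))⁻¹
        ≤ (A * s ^ k) * (B * s ^ l) * (s ^ (k + l + 3))⁻¹ := by gcongr
      _ = A * B * (s ^ 3)⁻¹ := by field_simp; ring
      _ ≤ A * B * ((((n : ℝ) + 1) ^ (3 / 2 : ℝ))⁻¹ * (((m : ℝ) + 1) ^ (3 / 2 : ℝ))⁻¹) := by
        rw [← mul_inv]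
        gcongr

lemma hasSum_mul_of_summable_norm {u v : ℕ → ℂ} {s t : ℂ} (hu : HasSum u s) (hv : HasSum v t)
    (hun : Summable fun n ↦ ‖u n‖) (hvn : Summable fun n ↦ ‖v n‖) :
    HasSum (fun p : ℕ × ℕ ↦ u p.1 * v p.2) (s * t) :=
  hu.mul hv (summable_mul_of_summable_norm hun hvn)

lemma IsCuspFormGamma0.hasSum_mul_conj {N v w : ℕ} {f g : ℂ → ℂ} {a b : ℕ → ℂ}
    (hf : IsCuspFormGamma0 N v f a) (hg : IsCuspFormGamma0 N w g b) (τ : ℍ) :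
    HasSum (fun p : ℕ × ℕ ↦ a (p.1 + 1) * Complex.exp (2 * π * I * (p.1 + 1) * τ) *
      conj (b (p.2 + 1) * Complex.exp (2 * π * I * (p.2 + 1) * τ))) (f τ * conj (g τ)) := by
  have hτ := coe_mem_UHP τ
  have hgs := (hg.2.2.2.1 τ hτ).map (starRingEnd ℂ) Complex.continuous_conj
  have hgn : Summable fun n : ℕ ↦
      ‖conj (b (n + 1) * Complex.exp (2 * π * I * (n + 1) * τ))‖ := by
    simpa only [RCLike.norm_conj] using hg.2.2.2.2 τ hτ
  have hmul := hasSum_mul_of_summable_norm (hf.2.2.2.1 τ hτ) hgs (hf.2.2.2.2 τ hτ) hgn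
  exact hmul

/-- The Rankin–Selberg integral over the strip. -/
lemma integrableOn_and_integral_strip_cuspForm {N k : ℕ} [NeZero N] {f g : ℂ → ℂ} {a b : ℕ → ℂ}
    (hf : IsCuspFormGamma0 N (2 * k) f a) (hg : IsCuspFormGamma0 N (2 * k + 8) g b) :
    IntegrableOn (fun τ : ℍ ↦ f τ * conj (g τ) * (τ.im : ℂ) ^ (2 * k + 8)) strip ∧
      ∫ τ : ℍ in strip, f τ * conj (g τ) * (τ.im : ℂ) ^ (2 * k + 8) =
        ((4 * (π : ℂ)) ^ (2 * k + 7))⁻¹ * (Real.Gamma (2 * k + 7) : ℂ) *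
          ∑' n : ℕ, a (n + 1) * conj (b (n + 1)) / ((n : ℂ) + 1) ^ (2 * k + 7) := by
  let r : ℕ × ℕ → ℝ := fun p ↦ 2 * π * (p.1 + p.2 + 2)
  have hr (p : ℕ × ℕ) : 0 < r p := by have := Real.pi_pos; positivity
  let v : ℕ × ℕ → ℍ → ℂ := fun p τ ↦ Complex.exp (2 * π * I * ((p.1 - p.2 : ℤ) : ℂ) * τ.re) *
    ((τ.im ^ (2 * k + 6 + 2) * Real.exp (-(r p * τ.im)) : ℝ) : ℂ)
  let c : ℕ × ℕ → ℂ := fun p ↦ a (p.1 + 1) * conj (b (p.2 + 1))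
  have hGamma : ((2 * k + 6 : ℕ) : ℝ) + 1 = 2 * k + 7 := by push_cast; ring
  have hIntegrable (p : ℕ × ℕ) : IntegrableOn (fun τ ↦ c p * v p τ) strip :=
    (integrableOn_and_integral_strip _ _ (hr p)).1.const_mul _
  have hnorm : Summable fun p : ℕ × ℕ ↦ ∫ τ in strip, ‖c p * v p τ‖ := by
    obtain ⟨A, hA, ha⟩ := hf.exists_coeff_bound
    obtain ⟨B, hB, hb⟩ := IsCuspFormGamma0.exists_coeff_bound (w := k + 4) (f := g) (a := b) hg
    have hs := (summable_mul_inv_add_pow (fun n ↦ norm_nonneg (a (n + 1)))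
      (fun n ↦ norm_nonneg (b (n + 1))) ha hb hA hB).mul_left
      (((2 * π) ^ (2 * k + 7))⁻¹ * Real.Gamma (2 * k + 7))
    refine hs.congr fun p ↦ ?_
    simp only [norm_mul (c p)]
    rw [integral_const_mul, integral_norm_strip _ _ (hr p), hGamma]
    simp only [c, r, norm_mul, RCLike.norm_conj, mul_pow, mul_inv]
    ring
  have hsum : ∀ᵐ τ ∂(volume.restrict strip), HasSum (fun p : ℕ × ℕ ↦ c p * v p τ)
      (f τ * conj (g τ) * (τ.im : ℂ) ^ (2 * k + 8)) := by
    refine ae_of_all _ fun τ ↦ ?_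
    have hmul := hf.hasSum_mul_conj hg τ
    refine (hmul.mul_right ((τ.im : ℂ) ^ (2 * k + 8))).congr_fun fun p ↦ ?_
    have he := exp_mul_conj_exp p.1 p.2 τ
    simp only [c, v, r, map_mul, Complex.ofReal_mul, Complex.ofReal_pow] at he ⊢
    linear_combination (-(a (p.1 + 1) * conj (b (p.2 + 1)) * (τ.im : ℂ) ^ (2 * k + 8))) * he
  obtain ⟨hI, hS⟩ := integrable_and_hasSum_integral hIntegrable hnorm hsum
  refine ⟨hI, ?_⟩
  have hval (p : ℕ × ℕ) : ∫ τ in strip, c p * v p τ = c p * ((if (p.1 - p.2 : ℤ) = 0 then 1 else 0)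
      * (((r p ^ (2 * k + 6 + 1))⁻¹ * Real.Gamma (2 * k + 7) : ℝ) : ℂ)) := by
    rw [integral_const_mul, (integrableOn_and_integral_strip _ _ (hr p)).2, hGamma]
  simp_rw [hval] at hS
  have hdiag : Function.Injective fun n : ℕ ↦ (n, n) := fun n m h ↦ congrArg Prod.fst h
  rw [← hdiag.hasSum_iff] at hS
  · rw [← hS.tsum_eq, ← tsum_mul_left]
    refine tsum_congr fun n ↦ ?_
    have hrn : r (n, n) = 4 * π * (n + 1) := by simp only [r]; ring
    simp only [Function.comp_apply, sub_self, if_true, hrn, c]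
    push_cast
    rw [mul_pow (4 * (π : ℂ)), mul_inv]
    ring
  · rintro ⟨n, m⟩ hp
    have hne : (n : ℤ) - m ≠ 0 := by
      intro h
      exact hp ⟨n, by simp; omega⟩
    simp [hne]

end StripIntegral

/-- The Petersson integrand without its Eisenstein series transforms by `j(γ,τ)^{-8}`. -/
lemma petersson_integrand_smul {N k : ℕ} {f g : ℂ → ℂ} {a b : ℕ → ℂ}
    (hf : IsCuspFormGamma0 N (2 * k) f a) (hg : IsCuspFormGamma0 N (2 * k + 8) g b)
    (γ : CongruenceSubgroup.Gamma0 N) (τ : ℍ) :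
    f (γ • τ : ℍ) * conj (g (γ • τ : ℍ)) * ((γ • τ).im : ℂ) ^ (2 * k + 8) =
      jsqN N τ (Quotient.mk _ γ) ^ (-4 : ℤ) *
        (f τ * conj (g τ) * (τ.im : ℂ) ^ (2 * k + 8)) := by
  have hj := automorphyFactor_ne_zero γ.1 τ
  have hfγ := hf.2.1 γ.1 γ.2 τ (coe_mem_UHP τ)
  have hgγ := hg.2.1 γ.1 γ.2 τ (coe_mem_UHP τ)
  rw [moeb_coe] at hfγ hgγ
  have him : ((γ.1 • τ).im : ℂ) = τ.im /
      ((((γ.1.1 1 0 : ℤ) : ℂ) * τ + ((γ.1.1 1 1 : ℤ) : ℂ)) *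
        conj (((γ.1.1 1 0 : ℤ) : ℂ) * τ + ((γ.1.1 1 1 : ℤ) : ℂ))) := by
    rw [Complex.mul_conj, ModularGroup.im_smul_eq_div_normSq, ModularGroup.denom_apply]
    push_cast
    rfl
  change f (γ.1 • τ : ℍ) * conj (g (γ.1 • τ : ℍ)) * ((γ.1 • τ).im : ℂ) ^ (2 * k + 8) =
    ((((γ.1.1 1 0 : ℤ) : ℂ) * τ + ((γ.1.1 1 1 : ℤ) : ℂ)) ^ 2) ^ (-4 : ℤ) * _
  rw [hfγ, hgγ, him]
  generalize ((γ.1.1 1 0 : ℤ) : ℂ) * (τ : ℂ) + ((γ.1.1 1 1 : ℤ) : ℂ) = j at hj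
  have hj' : conj j ≠ 0 := (map_ne_zero _).mpr hj
  rw [map_mul, map_pow, div_pow, mul_pow, zpow_neg, show (4 : ℤ) = (4 : ℕ) from rfl, zpow_natCast]
  field_simp
  ring

/-- Unfolding for `Γ₀(N)`: if `f`, `g` are cusp forms of weights `2k`, `2k+8` for `Γ₀(N)`
with Fourier coefficients `a`, `b`, and `F` is a measurable fundamental domain for `Γ₀(N)`,
then `∫_F f(τ) conj(g(τ)) E₈^{(N)}(τ) (Im τ)^{2k+8} d*τ
  = (4π)^{-(2k+7)} Γ(2k+7) ∑_{n≥1} a(n) conj(b(n)) n^{-(2k+7)}`. -/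
theorem petersson_with_E8N_eq_dirichlet_series (N k : ℕ) (hN : 1 ≤ N) (hk : 1 ≤ k)
    (f g : ℂ → ℂ) (a b : ℕ → ℂ)
    (hf : IsCuspFormGamma0 N (2 * k) f a) (hg : IsCuspFormGamma0 N (2 * k + 8) g b)
    (F : Set ℂ) (hF : IsFundamentalDomainGamma0 N F) :
    ∫ τ in F, f τ * conj (g τ) * E8N N τ * (τ.im : ℂ) ^ (2 * k + 8) ∂hypMeasure
      = ((4 * (π : ℂ)) ^ (2 * k + 7))⁻¹ * (Real.Gamma (2 * k + 7) : ℂ) *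
          ∑' n : ℕ, a (n + 1) * conj (b (n + 1)) / ((n : ℂ) + 1) ^ (2 * k + 7) := by
  have : NeZero N := ⟨by omega⟩
  obtain ⟨hIntegrable, hval⟩ := integrableOn_and_integral_strip_cuspForm hf hg
  obtain ⟨hsum, hunf⟩ := unfold_orbit_sum (UpperHalfPlane.measurable_coe hF.1)
    measurableSet_strip hIntegrable two_ne_zero hF.ae_ncard_eq_two
  rw [setIntegral_hypMeasure hF.1 hF.2.1, ← hval]
  have hcongr : ∀ᵐ τ ∂volume.restrict (UpperHalfPlane.coe ⁻¹' F),
      ∑' γ : CongruenceSubgroup.Gamma0 N, strip.indicator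
        (fun τ : ℍ ↦ f τ * conj (g τ) * (τ.im : ℂ) ^ (2 * k + 8)) (γ • τ) =
      2 * (f τ * conj (g τ) * E8N N τ * ((τ : ℂ).im : ℂ) ^ (2 * k + 8)) := by
    filter_upwards [hsum] with τ hτ
    rw [tsum_strip_eq_E8N_mul (fun γ ↦ petersson_integrand_smul hf hg γ τ) hτ]
    simp only [UpperHalfPlane.coe_im]
    ring
  rw [integral_congr_ae hcongr, integral_const_mul, Nat.cast_ofNat] at hunf
  exact mul_left_cancel₀ two_ne_zero hunf

end
end

section
/- Every modular form of weight 8 for SL₂(ℤ) whose constant Fourier coefficient (value at the cusp at infinity) is 0 is identically zero; in particular, every cusp form of weight 8 for SL₂(ℤ) vanishes identically, and the space of modular forms of weight 8 for SL₂(ℤ) has dimension 1. -/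
open Complex Real Set
open scoped MatrixGroups

noncomputable section

/-- `h` is a modular form of weight 8 for `SL₂(ℤ)` with Fourier coefficients `c`:
it is holomorphic on the upper half-plane, transforms with weight 8 under `SL₂(ℤ)`,
is bounded as `Im τ → ∞`, and has the Fourier expansion `h τ = ∑_{n ≥ 0} c n e^{2πinτ}`. -/
def IsModularFormWt8 (h : ℂ → ℂ) (c : ℕ → ℂ) : Prop :=
  DifferentiableOn ℂ h UHP ∧
  (∀ γ : SL(2, ℤ), ∀ τ ∈ UHP,
      h ((((γ.1 0 0 : ℤ) : ℂ) * τ + ((γ.1 0 1 : ℤ) : ℂ)) /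
          (((γ.1 1 0 : ℤ) : ℂ) * τ + ((γ.1 1 1 : ℤ) : ℂ)))
        = (((γ.1 1 0 : ℤ) : ℂ) * τ + ((γ.1 1 1 : ℤ) : ℂ)) ^ 8 * h τ) ∧
  (∃ C A : ℝ, ∀ τ ∈ UHP, A ≤ τ.im → ‖h τ‖ ≤ C) ∧
  (∀ τ ∈ UHP, HasSum (fun n : ℕ => c n * Complex.exp (2 * π * I * n * τ)) (h τ))

namespace IsModularFormWt8

open UpperHalfPlane ModularForm

variable {h : ℂ → ℂ} {c : ℕ → ℂ}

/-- The fractional linear action of `SL(2, ℤ)` on `ℍ`, with its coefficients cast from `ℤ`. -/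
lemma coe_smul_eq (γ : SL(2, ℤ)) (τ : ℍ) :
    ((γ • τ : ℍ) : ℂ) =
      (((γ.1 0 0 : ℤ) : ℂ) * τ + ((γ.1 0 1 : ℤ) : ℂ)) /
        (((γ.1 1 0 : ℤ) : ℂ) * τ + ((γ.1 1 1 : ℤ) : ℂ)) := by
  rw [UpperHalfPlane.coe_specialLinearGroup_apply]
  simp

lemma denom_eq (γ : SL(2, ℤ)) (τ : ℍ) :
    denom γ τ = ((γ.1 1 0 : ℤ) : ℂ) * τ + ((γ.1 1 1 : ℤ) : ℂ) := by
  simp [denom]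

lemma qParam_one_pow (τ : ℂ) (n : ℕ) :
    Function.Periodic.qParam 1 τ ^ n = Complex.exp (2 * π * Complex.I * n * τ) := by
  rw [Function.Periodic.qParam, ← Complex.exp_nat_mul]
  congr 1
  push_cast
  ring

lemma slash_eq (hh : IsModularFormWt8 h c) (γ : SL(2, ℤ)) :
    (fun τ : ℍ ↦ h τ) ∣[(8 : ℤ)] γ = fun τ : ℍ ↦ h τ := by
  ext τ
  have hd : denom γ τ ≠ 0 := denom_ne_zero _ _
  rw [SL_slash_apply, coe_smul_eq, hh.2.1 γ τ τ.im_pos, ← denom_eq, zpow_neg]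
  norm_cast
  field_simp

/-- The bundled modular form of weight 8 and level one given by restricting `h` to `ℍ`. -/
def toModularForm (hh : IsModularFormWt8 h c) : ModularForm 𝒮ℒ 8 where
  toFun τ := h τ
  slash_action_eq' := fun _ ⟨γ, hγ⟩ ↦ hγ ▸ hh.slash_eq γ
  holo' := mdifferentiable_iff.mpr <| hh.1.congr fun z hz ↦ by
    simp [ofComplex_apply_of_im_pos hz]
  bdd_at_cusps' {c'} hc' := by
    rw [OnePoint.isBoundedAt_iff_forall_SL2Z hc']
    intro γ _
    rw [hh.slash_eq γ, isBoundedAtImInfty_iff]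
    obtain ⟨C, A, hCA⟩ := hh.2.2.1
    exact ⟨C, A, fun z hz ↦ hCA z z.im_pos hz⟩

@[simp]
lemma toModularForm_apply (hh : IsModularFormWt8 h c) (τ : ℍ) : hh.toModularForm τ = h τ := rfl

lemma eqOn_zero_of_coeff_zero_eq_zero (hh : IsModularFormWt8 h c) (hc : c 0 = 0) :
    Set.EqOn h 0 UHP := by
  have h0 : (qExpansion 1 hh.toModularForm).coeff 0 = 0 := by
    rw [← ModularFormClass.qExpansion_coeff_unique (c := c) one_pos one_mem_strictPeriods_SL
      (fun τ ↦ ?_), hc]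
    simpa only [qParam_one_pow, smul_eq_mul, toModularForm_apply] using hh.2.2.2 τ τ.im_pos
  have hz : toCuspForm hh.toModularForm h0 = 0 :=
    rank_zero_iff_forall_zero.mp (CuspForm.rank_eq_zero_of_weight_lt_twelve (by norm_num)) _
  exact fun τ hτ ↦ DFunLike.congr_fun hz (⟨τ, hτ⟩ : ℍ)

/-- A bundled modular form of weight 8 and level one, extended to `ℂ` through `ofComplex`,
with the coefficients of its `q`-expansion. -/
lemma of_modularForm (f : ModularForm 𝒮ℒ 8) :
    IsModularFormWt8 (fun z ↦ f (ofComplex z)) (fun n ↦ (qExpansion 1 f).coeff n) := by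
  have : Fact (IsCusp OnePoint.infty 𝒮ℒ) :=
    ⟨Subgroup.isCusp_of_mem_strictPeriods one_pos one_mem_strictPeriods_SL⟩
  refine ⟨mdifferentiable_iff.mp f.holo', fun γ τ hτ ↦ ?_, ?_, fun τ hτ ↦ ?_⟩
  · lift τ to ℍ using hτ
    have hγ := SlashInvariantForm.slash_action_eqn'' f (Γ := 𝒮ℒ) ⟨γ, rfl⟩ τ
    beta_reduce
    rw [← coe_smul_eq, ← denom_eq, ofComplex_apply, ofComplex_apply]
    exact_mod_cast hγ
  · obtain ⟨C, A, hCA⟩ := isBoundedAtImInfty_iff.mp (ModularFormClass.bdd_at_infty f)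
    refine ⟨C, A, fun τ hτ hA ↦ ?_⟩
    beta_reduce
    rw [ofComplex_apply_of_im_pos hτ]
    exact hCA ⟨τ, hτ⟩ hA
  · beta_reduce
    rw [ofComplex_apply_of_im_pos hτ]
    simpa only [qParam_one_pow] using
      ModularForm.hasSum_qExpansion f one_pos one_mem_strictPeriods_SL ⟨τ, hτ⟩

end IsModularFormWt8

lemma ModularForm.levelOne_weight_eight_rank_one : Module.rank ℂ (ModularForm 𝒮ℒ 8) = 1 :=
  (rank_eq_one_add_rank_cuspForm (by norm_num) ⟨4, rfl⟩).trans
    ((congrArg (1 + ·) (CuspForm.rank_eq_zero_of_weight_lt_twelve (by norm_num))).trans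
      (by norm_cast))

/-- Every modular form of weight 8 for `SL₂(ℤ)` with vanishing constant Fourier coefficient
is identically zero on `ℍ`; in particular every cusp form of weight 8 vanishes identically,
and the space of modular forms of weight 8 for `SL₂(ℤ)` is one-dimensional: it contains a
nonzero form `h₀`, and every form is a scalar multiple of `h₀` on `ℍ`. -/
theorem weight_eight_modular_forms_dim_one :
    (∀ h : ℂ → ℂ, ∀ c : ℕ → ℂ, IsModularFormWt8 h c → c 0 = 0 → Set.EqOn h 0 UHP) ∧
    (∃ h₀ : ℂ → ℂ, ∃ c₀ : ℕ → ℂ, IsModularFormWt8 h₀ c₀ ∧ ¬ Set.EqOn h₀ 0 UHP ∧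
      ∀ h : ℂ → ℂ, ∀ c : ℕ → ℂ, IsModularFormWt8 h c →
        ∃ l : ℂ, Set.EqOn h (fun τ => l * h₀ τ) UHP) := by
  refine ⟨fun h c hh ↦ hh.eqOn_zero_of_coeff_zero_eq_zero, ?_⟩
  have hk : 3 ≤ 8 := by norm_num
  have hE : ModularForm.E hk ≠ 0 := EisensteinSeries.E_ne_zero hk ⟨4, rfl⟩
  refine ⟨_, _, IsModularFormWt8.of_modularForm (ModularForm.E hk), fun h0 ↦ hE ?_,
    fun h c hh ↦ ?_⟩
  · ext τ
    simpa using h0 τ.im_pos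
  · obtain ⟨l, hl⟩ := (finrank_eq_one_iff_of_nonzero' _ hE).mp
      (Module.rank_eq_one_iff_finrank_eq_one.mp ModularForm.levelOne_weight_eight_rank_one)
      hh.toModularForm
    refine ⟨l, fun τ hτ ↦ ?_⟩
    have := DFunLike.congr_fun hl (⟨τ, hτ⟩ : UpperHalfPlane)
    simpa [UpperHalfPlane.ofComplex_apply_of_im_pos hτ] using this.symm


end
end

section
/- Let m be a positive integer divisible by 8 and let S be a positive definite even unimodular m×m matrix. Then the theta series θ_S is a modular form of weight m/2 for SL₂(ℤ): θ_S is holomorphic on ℍ, θ_S((aτ+b)/(cτ+d)) = (cτ+d)^{m/2}·θ_S(τ) for all (a b; c d) ∈ SL₂(ℤ), and θ_S(τ) is bounded as Im τ → ∞. -/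
open Complex Real Set
open scoped MatrixGroups Matrix

noncomputable section

/-- `S ∈ M_m(ℤ)` is positive definite even unimodular: symmetric, positive definite (as a
real matrix), of determinant one, with all diagonal entries even. -/
def IsPosDefEvenUnimodular {m : ℕ} (S : Matrix (Fin m) (Fin m) ℤ) : Prop :=
  S.IsSymm ∧ (S.map ((↑) : ℤ → ℝ)).PosDef ∧ S.det = 1 ∧ ∀ i, Even (S i i)

/-- The theta series `θ_S(τ) = ∑_{x ∈ ℤ^m} e^{πiτ xᵀSx}` of an integral matrix `S`. -/
def thetaSeries {m : ℕ} (S : Matrix (Fin m) (Fin m) ℤ) (τ : ℂ) : ℂ :=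
  ∑' x : Fin m → ℤ, Complex.exp (π * I * τ * ((x ⬝ᵥ S.mulVec x : ℤ) : ℂ))

open MeasureTheory

/-- A product of nonnegative summable families, one for each coordinate, is summable over the
functions on a finite index type. -/
lemma summable_fintype_prod_of_nonneg {ι α : Type*} [Fintype ι] {g : α → ℝ}
    (hg₀ : ∀ a, 0 ≤ g a) (hg : Summable g) : Summable fun x : ι → α => ∏ i, g (x i) := by
  classical
  refine summable_of_sum_le (c := ∏ _i : ι, ∑' a, g a)
    (fun x => Finset.prod_nonneg fun i _ => hg₀ _) fun s => ?_
  calc ∑ x ∈ s, ∏ i, g (x i)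
      ≤ ∑ x ∈ Fintype.piFinset fun i => s.image fun x => x i, ∏ i, g (x i) := by
        refine Finset.sum_le_sum_of_subset_of_nonneg (fun x hx => ?_)
          fun x _ _ => Finset.prod_nonneg fun i _ => hg₀ _
        exact Fintype.mem_piFinset.2 fun i => Finset.mem_image_of_mem (fun x => x i) hx
    _ = ∏ i, ∑ a ∈ s.image fun x => x i, g a := (Finset.prod_univ_sum _ _).symm
    _ ≤ ∏ _i : ι, ∑' a, g a :=
        Finset.prod_le_prod (fun i _ => Finset.sum_nonneg fun a _ => hg₀ a)
          fun i _ => hg.sum_le_tsum _ fun a _ => hg₀ a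

/-- The Gaussian `exp (-c ‖x‖²)` is summable over the integer lattice `ℤ^ι`. -/
lemma summable_exp_neg_mul_sq_norm_intCast {ι : Type*} [Fintype ι] {c : ℝ} (hc : 0 < c) :
    Summable fun x : ι → ℤ => rexp (-c * ‖fun i => (x i : ℝ)‖ ^ 2) := by
  set N : ℝ := Fintype.card ι + 1 with hN
  have hN0 : 0 < N := by positivity
  have h1 : Summable fun n : ℤ => rexp (-(c / N) * (n : ℝ) ^ 2) := by
    have := summable_pow_mul_jacobiTheta₂_term_bound 0 (T := c / N / π) (by positivity) 0
    refine this.congr fun n => ?_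
    simp only [pow_zero, one_mul, mul_zero, zero_mul, sub_zero]
    congr 1
    field_simp
  have h2 := summable_fintype_prod_of_nonneg (ι := ι) (fun n => (Real.exp_pos _).le) h1
  refine h2.of_nonneg_of_le (fun x => (Real.exp_pos _).le) fun x => ?_
  rw [← Real.exp_sum, Real.exp_le_exp, ← Finset.mul_sum, neg_mul, neg_mul, neg_le_neg_iff,
    div_mul_eq_mul_div, div_le_iff₀ hN0, mul_assoc]
  refine mul_le_mul_of_nonneg_left ?_ hc.le
  calc ∑ i, (x i : ℝ) ^ 2 ≤ ∑ _i : ι, ‖fun i => (x i : ℝ)‖ ^ 2 := by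
        refine Finset.sum_le_sum fun i _ => ?_
        rw [← sq_abs]
        exact pow_le_pow_left₀ (abs_nonneg _) (norm_le_pi_norm (fun i => (x i : ℝ)) i) 2
    _ ≤ ‖fun i => (x i : ℝ)‖ ^ 2 * N := by
        rw [Finset.sum_const, nsmul_eq_mul, hN, Finset.card_univ, mul_comm]
        gcongr
        linarith

/-- The half-open unit cube with lower corner `a`. -/
def unitCubeIoc {ι : Type*} (a : ι → ℝ) : Set (ι → ℝ) := {y | ∀ i, y i ∈ Ioc (a i) (a i + 1)}

lemma measurableSet_unitCubeIoc {ι : Type*} [Fintype ι] (a : ι → ℝ) :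
    MeasurableSet (unitCubeIoc a) :=
  MeasurableSet.univ_pi' fun _ => measurableSet_Ioc

lemma volume_unitCubeIoc_lt_top {ι : Type*} [Fintype ι] (a : ι → ℝ) :
    volume (unitCubeIoc a) < ⊤ := by
  have : unitCubeIoc a = Set.univ.pi fun i => Ioc (a i) (a i + 1) := by
    ext; simp [unitCubeIoc]
  rw [this, volume_pi_pi]
  simp

lemma hasSum_setIntegral_unitCubeIoc {ι : Type*} [Fintype ι] {f : (ι → ℝ) → ℂ}
    (hf : Integrable f) :
    HasSum (fun x : ι → ℤ => ∫ y in unitCubeIoc 0, f (y + fun i => (x i : ℝ))) (∫ y, f y) := by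
  have hd : Pairwise (Function.onFun Disjoint
      fun x : ι → ℤ => unitCubeIoc fun i => (x i : ℝ)) := by
    intro x x' hxx'
    refine Set.disjoint_left.2 fun y hy hy' => hxx' (funext fun i => ?_)
    have h := hy i
    have h' := hy' i
    have h1 : (x i : ℝ) < x' i + 1 := h.1.trans_le h'.2
    have h2 : (x' i : ℝ) < x i + 1 := h'.1.trans_le h.2
    norm_cast at h1 h2
    omega
  have hu : ⋃ x : ι → ℤ, unitCubeIoc (fun i => (x i : ℝ)) = Set.univ := by
    refine Set.eq_univ_of_forall fun y => Set.mem_iUnion.2 ⟨fun i => ⌈y i⌉ - 1, fun i => ?_⟩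
    have h1 := Int.ceil_lt_add_one (y i)
    have h2 := Int.le_ceil (y i)
    push_cast
    constructor <;> linarith
  have := hasSum_integral_iUnion (μ := volume) (f := f)
    (fun x : ι → ℤ => measurableSet_unitCubeIoc fun i => (x i : ℝ)) hd (by rw [hu]; simpa using hf)
  rw [hu, setIntegral_univ] at this
  refine this.congr_fun fun x => ?_
  have hmp := measurePreserving_add_right (volume : Measure (ι → ℝ)) (fun i => (x i : ℝ))
  rw [← hmp.setIntegral_preimage_emb (measurableEmbedding_addRight _) f
    (unitCubeIoc fun i => (x i : ℝ))]
  congr 2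
  ext y
  simp only [unitCubeIoc, Set.mem_preimage, Set.mem_ofPred_eq, Pi.add_apply, Set.mem_Ioc,
    Pi.zero_apply]
  refine forall_congr' fun i => ?_
  constructor <;> rintro ⟨h1, h2⟩ <;> constructor <;> linarith

/-- **Poisson summation** over `ℤ^ι`, for a continuous integrable function whose translates by
lattice vectors are summable, uniformly on bounded sets, and whose Fourier transform is summable
over the lattice. -/
theorem tsum_intCast_eq_tsum_integral_cexp {ι : Type*} [Fintype ι] {f : (ι → ℝ) → ℂ}
    (hc : Continuous f) (hf : Integrable f)
    (hbound : ∀ R : ℝ, ∃ u : (ι → ℤ) → ℝ, Summable u ∧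
      ∀ y, ‖y‖ ≤ R → ∀ x : ι → ℤ, ‖f (y + fun i => (x i : ℝ))‖ ≤ u x)
    (hsum : Summable fun n : ι → ℤ => ∫ y, cexp (-(2 * π * I * ∑ i, (n i : ℂ) * y i)) * f y) :
    ∑' x : ι → ℤ, f (fun i => (x i : ℝ)) =
      ∑' n : ι → ℤ, ∫ y, cexp (-(2 * π * I * ∑ i, (n i : ℂ) * y i)) * f y := by
  set F : (ι → ℝ) → ℂ := fun y => ∑' x : ι → ℤ, f (y + fun i => (x i : ℝ)) with hF
  have hFc : Continuous F := by
    refine continuous_iff_continuousAt.2 fun y₀ => ?_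
    obtain ⟨u, hu, hfu⟩ := hbound (‖y₀‖ + 1)
    have hon : ContinuousOn F (Metric.ball 0 (‖y₀‖ + 1)) :=
      continuousOn_tsum (fun x => by fun_prop) hu fun x y hy =>
        hfu y (mem_ball_zero_iff.1 hy).le x
    exact hon.continuousAt (Metric.isOpen_ball.mem_nhds (by simp))
  have hper : ∀ (y : ι → ℝ) (z : ι → ℤ), F (y + fun i => (z i : ℝ)) = F y := by
    intro y z
    simp only [hF]
    rw [← (Equiv.addLeft z).tsum_eq fun x : ι → ℤ => f (y + fun i => (x i : ℝ))]
    refine tsum_congr fun x => congrArg f ?_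
    ext i
    simp [add_assoc]
  let p : C(ι → ℝ, UnitAddTorus ι) := ⟨fun y i => (y i : UnitAddCircle),
    continuous_pi fun i => (AddCircle.continuous_mk' 1).comp (continuous_apply i)⟩
  have hp : IsOpenQuotientMap p :=
    IsOpenQuotientMap.piMap fun _ => QuotientAddGroup.isOpenQuotientMap_mk
  have hpF : Function.FactorsThrough (⟨F, hFc⟩ : C(ι → ℝ, ℂ)) p := by
    intro y y' h
    have : ∀ i, ∃ z : ℤ, y' i = y i + z := fun i => by
      have : (y i : UnitAddCircle) = (y' i : UnitAddCircle) := congrFun h i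
      rw [eq_comm, QuotientAddGroup.eq_iff_sub_mem, AddSubgroup.mem_zmultiples_iff] at this
      obtain ⟨z, hz⟩ := this
      exact ⟨z, by simp at hz; linarith⟩
    choose z hz using this
    change F y = F y'
    rw [← hper y z]
    exact congrArg F (funext fun i => (hz i).symm)
  let G : C(UnitAddTorus ι, ℂ) := hp.isQuotientMap.lift ⟨F, hFc⟩ hpF
  have hG : ∀ y, G (p y) = F y := fun y =>
    congrArg (fun g : C(ι → ℝ, ℂ) => g y) (hp.isQuotientMap.lift_comp ⟨F, hFc⟩ hpF)
  have hmF : ∀ (n : ι → ℤ) (y : ι → ℝ),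
      UnitAddTorus.mFourier (-n) (p y) = cexp (-(2 * π * I * ∑ i, (n i : ℂ) * y i)) := by
    intro n y
    simp only [UnitAddTorus.mFourier, ContinuousMap.coe_mk, p, fourier_coe_apply, Pi.neg_apply]
    rw [← Complex.exp_sum, Finset.mul_sum, ← Finset.sum_neg_distrib]
    congr 1
    refine Finset.sum_congr rfl fun i _ => ?_
    push_cast
    ring
  have hcoeff : ∀ n, UnitAddTorus.mFourierCoeff G n =
      ∫ y, cexp (-(2 * π * I * ∑ i, (n i : ℂ) * y i)) * f y := by
    intro n
    have hnorm : ∀ y : ι → ℝ, ‖cexp (-(2 * π * I * ∑ i, (n i : ℂ) * y i))‖ = 1 := by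
      intro y
      rw [← Complex.norm_exp_ofReal_mul_I (-(2 * π * ∑ i, n i * y i))]
      congr 2
      push_cast
      ring
    have hcexp : Continuous fun y : ι → ℝ => cexp (-(2 * π * I * ∑ i, (n i : ℂ) * y i)) := by
      fun_prop
    have hgint : Integrable fun y => cexp (-(2 * π * I * ∑ i, (n i : ℂ) * y i)) * f y :=
      hf.bdd_mul hcexp.aestronglyMeasurable (c := 1) (ae_of_all _ fun y => (hnorm y).le)
    refine HasSum.unique ?_ (hasSum_setIntegral_unitCubeIoc hgint)
    rw [UnitAddTorus.mFourierCoeff_eq_integral G n 0]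
    obtain ⟨u, hu, hfu⟩ := hbound 1
    have hcube : ∀ y ∈ unitCubeIoc (0 : ι → ℝ), ‖y‖ ≤ 1 := fun y hy =>
      (pi_norm_le_iff_of_nonneg zero_le_one).2 fun i => by
        have := hy i
        simp only [Pi.zero_apply, zero_add, Set.mem_Ioc] at this
        rw [Real.norm_eq_abs, abs_le]
        constructor <;> linarith [this.1, this.2]
    have hfin : IsFiniteMeasure (volume.restrict (unitCubeIoc (0 : ι → ℝ))) :=
      ⟨by simpa using volume_unitCubeIoc_lt_top 0⟩
    refine hasSum_integral_of_dominated_convergence (fun x _ => u x) ?_ ?_ ?_ ?_ ?_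
    · intro x
      exact Continuous.aestronglyMeasurable (by fun_prop)
    · intro x
      filter_upwards [ae_restrict_mem (measurableSet_unitCubeIoc 0)] with y hy
      rw [norm_mul, hnorm, one_mul]
      exact hfu y (hcube y hy) x
    · exact ae_of_all _ fun _ => hu
    · exact integrable_const _
    · filter_upwards [ae_restrict_mem (measurableSet_unitCubeIoc 0)] with y hy
      have hs : HasSum (fun x : ι → ℤ => f (y + fun i => (x i : ℝ))) (F y) :=
        (Summable.of_norm_bounded hu fun x => hfu y (hcube y hy) x).hasSum
      have := hs.mul_left (cexp (-(2 * π * I * ∑ i, (n i : ℂ) * y i)))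
      rw [show G (fun i => (y i : UnitAddCircle)) = F y from hG y,
        show UnitAddTorus.mFourier (-n) (fun i => (y i : UnitAddCircle)) = _ from hmF n y,
        smul_eq_mul]
      refine this.congr_fun fun x => ?_
      congr 1
      rw [Complex.exp_eq_exp_iff_exists_int]
      refine ⟨-∑ i, n i * x i, ?_⟩
      simp only [Pi.add_apply, ofReal_add, mul_add, Finset.sum_add_distrib, Int.cast_neg,
        Int.cast_sum, Int.cast_mul, ofReal_intCast]
      ring
  have hcs : Summable (UnitAddTorus.mFourierCoeff G) := hsum.congr fun n => (hcoeff n).symm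
  have key := UnitAddTorus.hasSum_mFourier_series_apply_of_summable hcs (p 0)
  have hG0 : G (p 0) = ∑' x : ι → ℤ, f (fun i => (x i : ℝ)) := by
    rw [hG]
    simp [hF]
  rw [← hG0, ← key.tsum_eq]
  refine tsum_congr fun n => ?_
  have : UnitAddTorus.mFourier n (p 0) = 1 := by
    simpa using hmF (-n) 0
  rw [this, hcoeff, smul_eq_mul, mul_one]

open scoped MatrixOrder in
/-- A real positive definite matrix of determinant one is congruent to the identity through a
matrix of determinant `±1`. -/
lemma Matrix.PosDef.exists_transpose_mul_mul_eq_one {ι : Type*} [Fintype ι] [DecidableEq ι]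
    {R : Matrix ι ι ℝ} (hR : R.PosDef) (hdet : R.det = 1) :
    ∃ B : Matrix ι ι ℝ, |B.det| = 1 ∧ Bᵀ * R * B = 1 := by
  obtain ⟨A, hA⟩ := CStarAlgebra.nonneg_iff_eq_star_mul_self.mp hR.posSemidef.nonneg
  rw [Matrix.star_eq_conjTranspose, Matrix.conjTranspose_eq_transpose_of_trivial] at hA
  have hA2 : A.det * A.det = 1 := by
    rw [← hdet, hA, Matrix.det_mul, Matrix.det_transpose]
  have hAu : IsUnit A.det := IsUnit.of_mul_eq_one _ hA2
  have hAB : A * A⁻¹ = 1 := Matrix.mul_nonsing_inv A hAu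
  refine ⟨A⁻¹, ?_, ?_⟩
  · have h1 : |A.det| = 1 := by
      rw [← sq_eq_sq₀ (abs_nonneg _) zero_le_one, sq_abs, sq, hA2, one_pow]
    simp [h1]
  · rw [hA, Matrix.mul_assoc, Matrix.mul_assoc, hAB, Matrix.mul_one, ← Matrix.transpose_mul, hAB,
      Matrix.transpose_one]

lemma mul_transpose_mul_eq_one_of_transpose_mul_mul_eq_one {ι : Type*} [Fintype ι] [DecidableEq ι]
    {R B : Matrix ι ι ℝ} (hB : Bᵀ * R * B = 1) : B * Bᵀ * R = 1 := by
  rw [Matrix.mul_assoc]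
  exact mul_eq_one_comm.1 hB

lemma dotProduct_mulVec_mulVec_of_transpose_mul_mul_eq_one {ι : Type*} [Fintype ι] [DecidableEq ι]
    {R B : Matrix ι ι ℝ} (hB : Bᵀ * R * B = 1) (u : ι → ℝ) :
    (B *ᵥ u) ⬝ᵥ (R *ᵥ (B *ᵥ u)) = ∑ i, u i ^ 2 := by
  have : (B *ᵥ u) ⬝ᵥ (R *ᵥ (B *ᵥ u)) = u ⬝ᵥ ((Bᵀ * R * B) *ᵥ u) := by
    rw [← Matrix.mulVec_mulVec, ← Matrix.mulVec_mulVec, Matrix.dotProduct_mulVec u Bᵀ,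
      Matrix.vecMul_transpose]
  rw [this, hB, Matrix.one_mulVec, dotProduct]
  exact Finset.sum_congr rfl fun i _ => (sq _).symm

/-- A positive definite quadratic form dominates a positive multiple of the squared norm. -/
lemma exists_mul_sq_norm_le_dotProduct_mulVec {ι : Type*} [Fintype ι] [DecidableEq ι]
    {R B : Matrix ι ι ℝ} (hB : Bᵀ * R * B = 1) :
    ∃ c > 0, ∀ y : ι → ℝ, c * ‖y‖ ^ 2 ≤ y ⬝ᵥ (R *ᵥ y) := by
  set L := LinearMap.toContinuousLinearMap (Matrix.toLin' B)
  set K : ℝ := ‖L‖ + 1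
  have hK : 0 < K := by positivity
  refine ⟨(K ^ 2)⁻¹, by positivity, fun y => ?_⟩
  have hy : B *ᵥ ((Bᵀ * R) *ᵥ y) = y := by
    rw [Matrix.mulVec_mulVec, mul_eq_one_comm.1 hB, Matrix.one_mulVec]
  generalize (Bᵀ * R) *ᵥ y = u at hy
  subst hy
  rw [dotProduct_mulVec_mulVec_of_transpose_mul_mul_eq_one hB, inv_mul_le_iff₀ (by positivity)]
  have h1 : ‖B *ᵥ u‖ ≤ K * ‖u‖ := (L.le_opNorm u).trans (by gcongr; simp [K])
  have h2 : ‖u‖ ^ 2 ≤ ∑ i, u i ^ 2 := by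
    rw [← Real.le_sqrt (norm_nonneg _) (by positivity), pi_norm_le_iff_of_nonneg (by positivity)]
    intro i
    exact Real.abs_le_sqrt (Finset.single_le_sum (f := fun i => u i ^ 2)
      (fun j _ => sq_nonneg (u j)) (Finset.mem_univ i))
  calc ‖B *ᵥ u‖ ^ 2 ≤ (K * ‖u‖) ^ 2 := by gcongr
    _ = K ^ 2 * ‖u‖ ^ 2 := mul_pow _ _ _
    _ ≤ K ^ 2 * ∑ i, u i ^ 2 := by gcongr

lemma measurePreserving_toLin'_of_abs_det_eq_one {ι : Type*} [Fintype ι] [DecidableEq ι]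
    {B : Matrix ι ι ℝ} (hB : |B.det| = 1) :
    MeasurePreserving (Matrix.toLin' B) := by
  have h0 : B.det ≠ 0 := fun h => by simp [h] at hB
  refine ⟨(LinearMap.continuous_of_finiteDimensional _).measurable, ?_⟩
  rw [Real.map_matrix_volume_pi_eq_smul_volume_pi h0, abs_inv, hB]
  simp

lemma measurableEmbedding_toLin'_of_abs_det_eq_one {ι : Type*} [Fintype ι] [DecidableEq ι]
    {B : Matrix ι ι ℝ} (hB : |B.det| = 1) : MeasurableEmbedding (Matrix.toLin' B) := by
  have h0 : IsUnit B.det := isUnit_iff_ne_zero.2 fun h => by simp [h] at hB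
  let e := LinearEquiv.ofIsUnitDet (v := Pi.basisFun ℝ ι) (v' := Pi.basisFun ℝ ι)
    (f := Matrix.toLin' B) (by simpa using h0)
  exact e.toContinuousLinearEquiv.toHomeomorph.measurableEmbedding

lemma gaussian_comp_mulVec {ι : Type*} [Fintype ι] [DecidableEq ι]
    {R B : Matrix ι ι ℝ} (hB : Bᵀ * R * B = 1) (b : ℂ) (n u : ι → ℝ) :
    cexp (-(2 * π * I * ∑ i, (n i : ℂ) * ((B *ᵥ u) i : ℝ))) *
        cexp (-b * (((B *ᵥ u) ⬝ᵥ (R *ᵥ (B *ᵥ u)) : ℝ) : ℂ)) =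
      cexp (-b * ∑ i, (u i : ℂ) ^ 2 + ∑ i, (-(2 * π * I) * ((Bᵀ *ᵥ n) i : ℝ)) * u i) := by
  rw [← Complex.exp_add, dotProduct_mulVec_mulVec_of_transpose_mul_mul_eq_one hB]
  have h : ∑ i, n i * (B *ᵥ u) i = ∑ i, (Bᵀ *ᵥ n) i * u i := by
    change n ⬝ᵥ (B *ᵥ u) = (Bᵀ *ᵥ n) ⬝ᵥ u
    rw [Matrix.dotProduct_mulVec, Matrix.mulVec_transpose]
  have h' := congrArg (fun r : ℝ => (r : ℂ)) h
  push_cast at h' ⊢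
  rw [h', add_comm]
  simp only [mul_assoc, ← Finset.mul_sum]
  ring_nf

lemma integrable_cexp_neg_mul_quadraticForm {ι : Type*} [Fintype ι] [DecidableEq ι]
    {R B : Matrix ι ι ℝ} (hB : Bᵀ * R * B = 1) (hdet : |B.det| = 1) {b : ℂ} (hb : 0 < b.re) :
    Integrable fun y : ι → ℝ => cexp (-b * ((y ⬝ᵥ (R *ᵥ y) : ℝ) : ℂ)) := by
  rw [← (measurePreserving_toLin'_of_abs_det_eq_one hdet).integrable_comp_emb
    (measurableEmbedding_toLin'_of_abs_det_eq_one hdet)]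
  refine (GaussianFourier.integrable_cexp_neg_mul_sum_add (ι := ι) hb 0).congr
    (ae_of_all _ fun u => ?_)
  simpa using (gaussian_comp_mulVec hB b 0 u).symm

/-- The Fourier transform of the Gaussian attached to a positive definite quadratic form of
determinant one. -/
lemma integral_cexp_mul_cexp_neg_mul_quadraticForm {ι : Type*} [Fintype ι] [DecidableEq ι]
    {R B : Matrix ι ι ℝ} (hB : Bᵀ * R * B = 1) (hdet : |B.det| = 1) {b : ℂ} (hb : 0 < b.re)
    (n : ι → ℝ) :
    ∫ y : ι → ℝ, cexp (-(2 * π * I * ∑ i, (n i : ℂ) * y i)) *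
        cexp (-b * ((y ⬝ᵥ (R *ᵥ y) : ℝ) : ℂ)) =
      (π / b) ^ (Fintype.card ι / 2 : ℂ) *
        cexp (-(π ^ 2 / b) * ((n ⬝ᵥ ((B * Bᵀ) *ᵥ n) : ℝ) : ℂ)) := by
  rw [← (measurePreserving_toLin'_of_abs_det_eq_one hdet).integral_comp
    (measurableEmbedding_toLin'_of_abs_det_eq_one hdet)]
  simp only [Matrix.toLin'_apply, gaussian_comp_mulVec hB]
  rw [GaussianFourier.integral_cexp_neg_mul_sum_add hb]
  have hb0 : b ≠ 0 := fun h => by simp [h] at hb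
  have h : n ⬝ᵥ ((B * Bᵀ) *ᵥ n) = ∑ i, (Bᵀ *ᵥ n) i ^ 2 := by
    rw [← Matrix.mulVec_mulVec, Matrix.dotProduct_mulVec, ← Matrix.mulVec_transpose, dotProduct]
    exact Finset.sum_congr rfl fun i _ => (sq _).symm
  rw [h]
  congr 2
  simp only [mul_pow, ← Finset.mul_sum, neg_sq, I_sq]
  push_cast
  field_simp
  ring

section ThetaSeries

variable {m : ℕ} {S : Matrix (Fin m) (Fin m) ℤ}

lemma intCast_dotProduct_mulVec (S : Matrix (Fin m) (Fin m) ℤ) (x : Fin m → ℤ) :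
    ((x ⬝ᵥ S.mulVec x : ℤ) : ℝ) =
      (fun i => (x i : ℝ)) ⬝ᵥ (S.map ((↑) : ℤ → ℝ) *ᵥ fun i => (x i : ℝ)) := by
  simp [dotProduct, Matrix.mulVec]

lemma norm_cexp_pi_mul_I_mul (τ : ℂ) (q : ℝ) :
    ‖cexp (π * I * τ * (q : ℂ))‖ = rexp (-(π * τ.im * q)) := by
  rw [Complex.norm_exp]
  simp

namespace IsPosDefEvenUnimodular

lemma exists_transpose_mul_mul_eq_one (hS : IsPosDefEvenUnimodular S) :
    ∃ B : Matrix (Fin m) (Fin m) ℝ, |B.det| = 1 ∧ Bᵀ * S.map ((↑) : ℤ → ℝ) * B = 1 := by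
  refine hS.2.1.exists_transpose_mul_mul_eq_one ?_
  have := (Int.castRingHom ℝ).map_det S
  rw [hS.2.2.1, map_one] at this
  exact this.symm

lemma exists_mul_sq_norm_le (hS : IsPosDefEvenUnimodular S) :
    ∃ c > 0, ∀ y : Fin m → ℝ, c * ‖y‖ ^ 2 ≤ y ⬝ᵥ (S.map ((↑) : ℤ → ℝ) *ᵥ y) := by
  obtain ⟨B, -, hB⟩ := hS.exists_transpose_mul_mul_eq_one
  exact exists_mul_sq_norm_le_dotProduct_mulVec hB

/-- The terms of the theta series are dominated, uniformly for `Im τ ≥ a > 0`, by a summable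
family. -/
lemma exists_summable_bound (hS : IsPosDefEvenUnimodular S) {a : ℝ} (ha : 0 < a) :
    ∃ u : (Fin m → ℤ) → ℝ, Summable u ∧ ∀ τ : ℂ, a ≤ τ.im → ∀ x : Fin m → ℤ,
      ‖cexp (π * I * τ * ((x ⬝ᵥ S.mulVec x : ℤ) : ℂ))‖ ≤ u x := by
  obtain ⟨c, hc, hcS⟩ := hS.exists_mul_sq_norm_le
  refine ⟨_, summable_exp_neg_mul_sq_norm_intCast (ι := Fin m) (c := π * a * c) (by positivity),
    fun τ hτ x => ?_⟩
  have hτ0 : 0 < τ.im := ha.trans_le hτ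
  have h := hcS fun i => (x i : ℝ)
  rw [← intCast_dotProduct_mulVec] at h
  rw [← ofReal_intCast, norm_cexp_pi_mul_I_mul, Real.exp_le_exp, neg_mul, neg_le_neg_iff]
  calc π * a * c * ‖fun i => (x i : ℝ)‖ ^ 2 = π * a * (c * ‖fun i => (x i : ℝ)‖ ^ 2) := by ring
    _ ≤ π * τ.im * ((x ⬝ᵥ S.mulVec x : ℤ) : ℝ) := by gcongr

lemma summable_norm_cexp (hS : IsPosDefEvenUnimodular S) {τ : ℂ} (hτ : 0 < τ.im) :
    Summable fun x : Fin m → ℤ => ‖cexp (π * I * τ * ((x ⬝ᵥ S.mulVec x : ℤ) : ℂ))‖ := by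
  obtain ⟨u, hu, hle⟩ := hS.exists_summable_bound hτ
  exact hu.of_nonneg_of_le (fun _ => norm_nonneg _) fun x => hle τ le_rfl x

lemma differentiableOn_thetaSeries (hS : IsPosDefEvenUnimodular S) :
    DifferentiableOn ℂ (thetaSeries S) UHP := by
  intro τ hτ
  have hτ' : 0 < τ.im / 2 := half_pos hτ
  obtain ⟨u, hu, hle⟩ := hS.exists_summable_bound hτ'
  have hmem : τ ∈ {z : ℂ | τ.im / 2 < z.im} := by
    simp only [Set.mem_ofPred_eq]
    linarith
  have hU : IsOpen {z : ℂ | τ.im / 2 < z.im} := isOpen_lt continuous_const continuous_im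
  have hd : DifferentiableOn ℂ (thetaSeries S) {z : ℂ | τ.im / 2 < z.im} :=
    differentiableOn_tsum_of_summable_norm hu (fun x => by fun_prop) hU
      fun x z hz => hle z (le_of_lt hz) x
  exact (hd.differentiableAt (hU.mem_nhds hmem)).differentiableWithinAt

lemma exists_norm_thetaSeries_le (hS : IsPosDefEvenUnimodular S) :
    ∃ C : ℝ, ∀ τ : ℂ, 1 ≤ τ.im → ‖thetaSeries S τ‖ ≤ C := by
  obtain ⟨u, hu, hle⟩ := hS.exists_summable_bound one_pos
  exact ⟨∑' x, u x, fun τ hτ => tsum_of_norm_bounded hu.hasSum (hle τ hτ)⟩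

lemma even_dotProduct_mulVec (hS : IsPosDefEvenUnimodular S) (x : Fin m → ℤ) :
    Even (x ⬝ᵥ S.mulVec x) := by
  rw [← ZMod.intCast_eq_zero_iff_even]
  have : ((x ⬝ᵥ S.mulVec x : ℤ) : ZMod 2) =
      ∑ p : Fin m × Fin m, ((x p.1 * (S p.1 p.2 * x p.2) : ℤ) : ZMod 2) := by
    simp [dotProduct, Matrix.mulVec, Fintype.sum_prod_type, Finset.mul_sum]
  rw [this]
  refine Finset.sum_involution (fun p _ => p.swap) ?_ ?_ (fun _ _ => Finset.mem_univ _)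
    (fun p _ => p.swap_swap)
  · rintro ⟨i, j⟩ -
    have hij : S j i = S i j := hS.1.apply i j
    simp only [Prod.swap_prod_mk, hij, ← Int.cast_add]
    rw [ZMod.intCast_eq_zero_iff_even]
    exact ⟨x i * (S i j * x j), by ring⟩
  · rintro ⟨i, j⟩ - hne heq
    obtain rfl : j = i := congrArg Prod.fst heq
    refine hne ?_
    rw [ZMod.intCast_eq_zero_iff_even]
    exact ((hS.2.2.2 j).mul_right _).mul_left _

lemma thetaSeries_add_one (hS : IsPosDefEvenUnimodular S) (τ : ℂ) :
    thetaSeries S (τ + 1) = thetaSeries S τ := by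
  refine tsum_congr fun x => ?_
  obtain ⟨k, hk⟩ := hS.even_dotProduct_mulVec x
  rw [Complex.exp_eq_exp_iff_exists_int]
  refine ⟨k, ?_⟩
  rw [hk]
  push_cast
  ring

/-- Multiplication by a unimodular matrix permutes the integer lattice. -/
def mulVecEquiv (hS : IsPosDefEvenUnimodular S) : (Fin m → ℤ) ≃ (Fin m → ℤ) where
  toFun x := S *ᵥ x
  invFun x := S⁻¹ *ᵥ x
  left_inv x := by simp [Matrix.nonsing_inv_mul S (by simp [hS.2.2.1])]
  right_inv x := by simp [Matrix.mul_nonsing_inv S (by simp [hS.2.2.1])]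

/-- The inversion formula for the theta series of an even unimodular matrix. -/
theorem thetaSeries_eq_cpow_mul (hS : IsPosDefEvenUnimodular S) {τ : ℂ} (hτ : 0 < τ.im) :
    thetaSeries S τ = (I / τ) ^ (m / 2 : ℂ) * thetaSeries S (-1 / τ) := by
  obtain ⟨B, hdet, hB⟩ := hS.exists_transpose_mul_mul_eq_one
  obtain ⟨c, hc, hcS⟩ := hS.exists_mul_sq_norm_le
  set R := S.map ((↑) : ℤ → ℝ) with hR
  have hτ0 : τ ≠ 0 := fun h => by simp [h] at hτ
  have hb : 0 < (-(π * I * τ)).re := by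
    simpa using mul_pos Real.pi_pos hτ
  set f : (Fin m → ℝ) → ℂ := fun y => cexp (-(-(π * I * τ)) * ((y ⬝ᵥ (R *ᵥ y) : ℝ) : ℂ)) with hf
  have hfint : Integrable f := integrable_cexp_neg_mul_quadraticForm hB hdet hb
  have hfc : Continuous f := by
    simp only [hf, dotProduct, Matrix.mulVec]
    fun_prop
  have hfourier : ∀ x : Fin m → ℤ,
      ∫ y, cexp (-(2 * π * I * ∑ i, ((hS.mulVecEquiv x) i : ℂ) * y i)) * f y =
        (I / τ) ^ (m / 2 : ℂ) * cexp (π * I * (-1 / τ) * ((x ⬝ᵥ S.mulVec x : ℤ) : ℂ)) := by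
    intro x
    have hcast : (fun i => ((hS.mulVecEquiv x i : ℤ) : ℝ)) = R *ᵥ fun i => (x i : ℝ) := by
      ext i
      simp [mulVecEquiv, Matrix.mulVec, dotProduct, hR]
    have h := integral_cexp_mul_cexp_neg_mul_quadraticForm hB hdet hb
      fun i => ((hS.mulVecEquiv x i : ℤ) : ℝ)
    simp only [ofReal_intCast] at h
    rw [h, hcast, Matrix.mulVec_mulVec, mul_transpose_mul_eq_one_of_transpose_mul_mul_eq_one hB,
      Matrix.one_mulVec, dotProduct_comm, ← intCast_dotProduct_mulVec, Fintype.card_fin,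
      ofReal_intCast]
    have hpi : (π : ℂ) ≠ 0 := ofReal_ne_zero.2 Real.pi_ne_zero
    congr 2
    · field_simp
      simp
    · congr 1
      field_simp
      simp
  have him : 0 < (-1 / τ).im := by
    rw [neg_div, one_div, neg_im, inv_im, neg_div, neg_neg]
    exact div_pos hτ (normSq_pos.2 hτ0)
  have hsum : Summable fun n : Fin m → ℤ =>
      ∫ y, cexp (-(2 * π * I * ∑ i, (n i : ℂ) * y i)) * f y := by
    rw [← hS.mulVecEquiv.summable_iff]
    refine (((hS.summable_norm_cexp him).of_norm).mul_left ((I / τ) ^ (m / 2 : ℂ))).congr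
      fun x => (hfourier x).symm
  have hbound : ∀ r : ℝ, ∃ u : (Fin m → ℤ) → ℝ, Summable u ∧
      ∀ y, ‖y‖ ≤ r → ∀ x : Fin m → ℤ, ‖f (y + fun i => (x i : ℝ))‖ ≤ u x := by
    intro r
    set C := π * τ.im * c with hC
    have hC0 : 0 < C := by positivity
    refine ⟨_, (summable_exp_neg_mul_sq_norm_intCast (ι := Fin m) (c := C / 2)
      (by positivity)).mul_left (rexp (C * r ^ 2)), fun y hy x => ?_⟩
    set v : Fin m → ℝ := fun i => (x i : ℝ)
    simp only [hf, neg_neg]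
    rw [norm_cexp_pi_mul_I_mul, ← Real.exp_add, Real.exp_le_exp]
    have h1 : π * τ.im * (c * ‖y + v‖ ^ 2) ≤ π * τ.im * ((y + v) ⬝ᵥ (R *ᵥ (y + v))) :=
      mul_le_mul_of_nonneg_left (hcS (y + v)) (by positivity)
    have h2 : ‖v‖ ≤ ‖y + v‖ + ‖y‖ := by
      simpa using norm_sub_le (y + v) y
    have h3 : ‖v‖ ^ 2 ≤ 2 * ‖y + v‖ ^ 2 + 2 * r ^ 2 := by
      nlinarith [norm_nonneg v, norm_nonneg y, norm_nonneg (y + v), sq_nonneg (‖y + v‖ - r)]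
    nlinarith
  have key := tsum_intCast_eq_tsum_integral_cexp hfc hfint hbound hsum
  rw [← hS.mulVecEquiv.tsum_eq fun n : Fin m → ℤ =>
    ∫ y, cexp (-(2 * π * I * ∑ i, (n i : ℂ) * y i)) * f y, tsum_congr hfourier,
    tsum_mul_left] at key
  rw [thetaSeries, thetaSeries, ← key]
  refine tsum_congr fun x => ?_
  simp only [hf]
  rw [neg_neg, ← intCast_dotProduct_mulVec, ofReal_intCast]

theorem thetaSeries_neg_one_div (hS : IsPosDefEvenUnimodular S) (hm : 8 ∣ m) {τ : ℂ}
    (hτ : 0 < τ.im) : thetaSeries S (-1 / τ) = τ ^ (m / 2) * thetaSeries S τ := by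
  have hτ0 : τ ≠ 0 := fun h => by simp [h] at hτ
  obtain ⟨k, rfl⟩ := hm
  have hexp : ((8 * k : ℕ) / 2 : ℂ) = ((4 * k : ℕ) : ℂ) := by
    push_cast
    ring
  rw [hS.thetaSeries_eq_cpow_mul hτ, hexp, cpow_natCast, div_pow, pow_mul I, I_pow_four, one_pow,
    show 8 * k / 2 = 4 * k by omega, ← mul_assoc, mul_one_div_cancel (pow_ne_zero _ hτ0), one_mul]

open UpperHalfPlane ModularGroup ModularForm in
/-- The theta series is invariant under the weight `m / 2` slash action of `SL₂(ℤ)`. -/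
theorem thetaSeries_slash (hS : IsPosDefEvenUnimodular S) (hm : 8 ∣ m) (γ : SL(2, ℤ)) :
    (fun z : ℍ => thetaSeries S z) ∣[((m / 2 : ℕ) : ℤ)] γ = fun z : ℍ => thetaSeries S z := by
  refine SlashInvariantForm.slash_action_generators_SL2Z ?_ ?_ γ
  · ext z
    rw [SlashInvariantForm.slash_S_apply]
    have hz : (-(z : ℂ))⁻¹ = -1 / z := by rw [← neg_inv, neg_div, one_div]
    simp only [hz]
    rw [hS.thetaSeries_neg_one_div hm z.im_pos, zpow_neg, zpow_natCast]
    field_simp [z.ne_zero]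
  · ext z
    rw [SL_slash_apply, modular_T_smul]
    simp only [denom_apply, coe_vadd, ofReal_one]
    rw [add_comm, hS.thetaSeries_add_one]
    simp [T]

open UpperHalfPlane ModularGroup ModularForm in
theorem thetaSeries_moebius (hS : IsPosDefEvenUnimodular S) (hm : 8 ∣ m) (γ : SL(2, ℤ)) {τ : ℂ}
    (hτ : 0 < τ.im) :
    thetaSeries S ((((γ.1 0 0 : ℤ) : ℂ) * τ + ((γ.1 0 1 : ℤ) : ℂ)) /
        (((γ.1 1 0 : ℤ) : ℂ) * τ + ((γ.1 1 1 : ℤ) : ℂ))) =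
      (((γ.1 1 0 : ℤ) : ℂ) * τ + ((γ.1 1 1 : ℤ) : ℂ)) ^ (m / 2) * thetaSeries S τ := by
  have h := congrFun (hS.thetaSeries_slash hm γ) ⟨τ, hτ⟩
  rw [SL_slash_apply, zpow_neg, zpow_natCast,
    mul_inv_eq_iff_eq_mul₀ (pow_ne_zero _ (denom_ne_zero _ _)), denom_apply,
    coe_specialLinearGroup_apply, mul_comm (thetaSeries S _)] at h
  simpa using h

end IsPosDefEvenUnimodular

end ThetaSeries

/-- For `8 ∣ m` and `S` a positive definite even unimodular `m × m` matrix, the theta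
series `θ_S` is a modular form of weight `m/2` for `SL₂(ℤ)`: the defining series converges
absolutely on `ℍ`, `θ_S` is holomorphic on `ℍ`, transforms with weight `m/2` under
`SL₂(ℤ)`, and is bounded as `Im τ → ∞`. -/
theorem thetaSeries_isModularForm (m : ℕ) (hm : 0 < m) (hm8 : 8 ∣ m)
    (S : Matrix (Fin m) (Fin m) ℤ) (hS : IsPosDefEvenUnimodular S) :
    (∀ τ ∈ UHP,
        Summable (fun x : Fin m → ℤ => ‖Complex.exp (π * I * τ * ((x ⬝ᵥ S.mulVec x : ℤ) : ℂ))‖)) ∧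
    DifferentiableOn ℂ (thetaSeries S) UHP ∧
    (∀ γ : SL(2, ℤ), ∀ τ ∈ UHP,
        thetaSeries S ((((γ.1 0 0 : ℤ) : ℂ) * τ + ((γ.1 0 1 : ℤ) : ℂ)) /
            (((γ.1 1 0 : ℤ) : ℂ) * τ + ((γ.1 1 1 : ℤ) : ℂ)))
          = (((γ.1 1 0 : ℤ) : ℂ) * τ + ((γ.1 1 1 : ℤ) : ℂ)) ^ (m / 2) * thetaSeries S τ) ∧
    (∃ C A : ℝ, ∀ τ ∈ UHP, A ≤ τ.im → ‖thetaSeries S τ‖ ≤ C) := by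
  obtain ⟨C, hC⟩ := hS.exists_norm_thetaSeries_le
  exact ⟨fun τ hτ => hS.summable_norm_cexp hτ, hS.differentiableOn_thetaSeries,
    fun γ τ hτ => hS.thetaSeries_moebius hm8 γ hτ, C, 1, fun τ _ hτ => hC τ hτ⟩

end
end
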